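/- arXiv:0806.4394 — 11 statements merged into one kernel-verified Lean document; each statement's English description precedes it below -/
import Mathlib

section
/- Let K be a field of characteristic zero, R a commutative K-algebra, and N₀ an n×n matrix over R. Suppose there exist pairwise distinct elements ξ_1, …, ξ_m ∈ K and positive integers n_1, …, n_m such that ∏_{k=1}^m (N₀ − ξ_k·I)^{n_k} = 0 in Mat_n(R), and suppose that for all k, l the difference ξ_l − ξ_k ∈ K is not a nonzero rational integer (i.e. ξ_l − ξ_k ≠ i·1_K for every nonzero integer i). Then for every integer i ≥ 1 the R-linear map Mat_n(R) → Mat_n(R), Y ↦ i·Y + N₀·Y − Y·N₀, is bijective. -/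
open Polynomial

theorem aux_div {K E : Type*} [Field K] [Ring E] [Algebra K E] (a b : E) (h : Commute a b)
    (q : K[X]) : ∃ t : E, (a - b) * t = aeval a q - aeval b q ∧
      t * (a - b) = aeval a q - aeval b q := by
  induction q using Polynomial.induction_on' with
  | add p q hp hq =>
    obtain ⟨s, hs, hs'⟩ := hp
    obtain ⟨t, ht, ht'⟩ := hq
    refine ⟨s + t, ?_, ?_⟩
    · rw [mul_add, hs, ht, map_add, map_add]; abel
    · rw [add_mul, hs', ht', map_add, map_add]; abel
  | monomial k c =>
    refine ⟨c • ∑ i ∈ Finset.range k, a ^ i * b ^ (k - 1 - i), ?_, ?_⟩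
    · rw [mul_smul_comm, h.mul_geom_sum₂]
      simp [aeval_monomial, mul_sub, Algebra.smul_def]
    · rw [smul_mul_assoc, h.geom_sum₂_mul]
      simp [aeval_monomial, mul_sub, Algebra.smul_def]

theorem aux_left {K A : Type*} [Field K] [Ring A] [Algebra K A] (a : A) (q : K[X]) :
    aeval (LinearMap.mulLeft K a) q = LinearMap.mulLeft K (aeval a q) := by
  exact aeval_algHom_apply (Algebra.lmul K A) a q

theorem aux_right {K A : Type*} [Field K] [Ring A] [Algebra K A] (a : A) (q : K[X]) :
    aeval (LinearMap.mulRight K a) q = LinearMap.mulRight K (aeval a q) := by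
  induction q using Polynomial.induction_on' with
  | add p q hp hq =>
    rw [map_add, map_add, hp, hq]; ext y; simp [mul_add]
  | monomial k c =>
    ext y
    simp [aeval_monomial, ← Algebra.smul_def]

theorem aux_main {K A : Type*} [Field K] [Ring A] [Algebra K A] (a b : A) (p q : K[X])
    (hpq : IsCoprime p q) (hp : aeval b p = 0) (hq : aeval a q = 0) :
    Function.Bijective (fun y : A => a * y - y * b) := by
  obtain ⟨t, ht, ht'⟩ := aux_div (LinearMap.mulLeft K a) (LinearMap.mulRight K b)
    (LinearMap.ext fun y => by simp [mul_assoc]) q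
  rw [aux_left, aux_right, hq] at ht ht'
  obtain ⟨u, v, huv⟩ := hpq
  have h1 : aeval b v * aeval b q = 1 := by
    have := congrArg (aeval b) huv
    simpa [hp] using this
  have h2 : aeval b q * aeval b v = 1 := by
    rw [← map_mul, mul_comm, map_mul, h1]
  constructor
  · intro x y hxy
    have e : ∀ z, t (a * z - z * b) = - (z * aeval b q) := fun z => by
      simpa using LinearMap.congr_fun ht' z
    have h3 : x * aeval b q = y * aeval b q := by
      have := congrArg t hxy
      simp only [e] at this
      exact neg_injective this
    have := congrArg (· * aeval b v) h3
    simpa [mul_assoc, h2] using this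
  · intro y
    refine ⟨t (-(y * aeval b v)), ?_⟩
    have := LinearMap.congr_fun ht (-(y * aeval b v))
    simpa [mul_assoc, h1] using this

/-- **Key algebraic step in Lemma 3.2.8 (claim 1).**
Let `K` be a field of characteristic zero, `R` a commutative `K`-algebra and `N₀` an
`n × n` matrix over `R`.  If `N₀` is annihilated by `∏ k, (X - ξ k)^(nk k)` where the
`ξ k ∈ K` are pairwise distinct and no difference `ξ l - ξ k` is a nonzero rational
integer, then for every integer `i ≥ 1` the map `Y ↦ i • Y + N₀ * Y - Y * N₀` is a
bijection of `Mat_n(R)`. -/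
theorem stmt0 (K : Type*) [Field K] [CharZero K] (R : Type*) [CommRing R] [Algebra K R]
    (n m : ℕ) (N₀ : Matrix (Fin n) (Fin n) R) (ξ : Fin m → K) (nk : Fin m → ℕ)
    (hnk : ∀ k, 1 ≤ nk k)
    (hdist : Function.Injective ξ)
    (hann : Polynomial.aeval N₀
      (∏ k : Fin m, (Polynomial.X - Polynomial.C (algebraMap K R (ξ k))) ^ nk k) = 0)
    (hNID : ∀ k l : Fin m, ∀ i : ℤ, i ≠ 0 → ξ l - ξ k ≠ (i : K)) :
    ∀ i : ℕ, 1 ≤ i →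
      Function.Bijective (fun Y : Matrix (Fin n) (Fin n) R =>
        (i : R) • Y + N₀ * Y - Y * N₀) := by
  intro i hi
  have hP : aeval N₀ (∏ k : Fin m, (X - C (ξ k)) ^ nk k) = 0 := by
    rw [← hann, ← aeval_map_algebraMap R]
    simp [Polynomial.map_prod]
  have hQ : aeval ((i : Matrix (Fin n) (Fin n) R) + N₀)
      ((∏ k : Fin m, (X - C (ξ k)) ^ nk k).comp (X - C (i : K))) = 0 := by
    rw [aeval_comp]
    have : aeval ((i : Matrix (Fin n) (Fin n) R) + N₀) (X - C (i : K)) = N₀ := by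
      simp
    rw [this, hP]
  have hco : IsCoprime (∏ k : Fin m, (X - C (ξ k)) ^ nk k)
      ((∏ k : Fin m, (X - C (ξ k)) ^ nk k).comp (X - C (i : K))) := by
    rw [Polynomial.prod_comp]
    refine IsCoprime.prod_left fun k _ => IsCoprime.prod_right fun l _ => ?_
    rw [pow_comp]
    refine IsCoprime.pow ?_
    have e : (X - C (ξ l)).comp (X - C (i : K)) = X - C (ξ l + i) := by
      rw [sub_comp, X_comp, C_comp, C_add]; ring
    rw [e]
    refine isCoprime_X_sub_C_of_isUnit_sub (IsUnit.mk0 _ fun h => ?_)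
    refine hNID l k (i : ℤ) (by omega) ?_
    push_cast
    linear_combination h
  convert aux_main _ _ _ _ hco hP hQ using 2 with Y
  rw [add_mul, Nat.cast_smul_eq_nsmul, nsmul_eq_mul]
end

section
/- Let K be a field of characteristic zero, complete with respect to a nonarchimedean absolute value ‖·‖ with ‖p·1_K‖ < 1 for some prime number p. Let α ∈ K be such that α ≠ s·1_K for every natural number s, and assume α has positive type, i.e. there exists ρ ∈ (0,1] such that sup_{s∈ℕ} ρ^s·‖α − s‖^{−1} < ∞. Then there exists ρ' > 0 such that sup_{s∈ℕ} ρ'^s · ‖∏_{i=1}^s (i − α)‖^{−1} < ∞; in other words, the power series ∑_{s≥0} X^s / ∏_{i=1}^s (i − α) has positive radius of convergence. -/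
lemma aux_fact {K : Type*} [NormedField K] [IsUltrametricDist K]
    (p : ℕ) (hp : p.Prime) (hpn : ‖(p : K)‖ < 1) (n : ℕ) :
    ‖(p : K)‖ ^ n ≤ ‖((n.factorial : ℕ) : K)‖ := by
  have := Fact.mk hp
  obtain ⟨v, m, hm, h⟩ := Nat.exists_eq_pow_mul_and_not_dvd (Nat.factorial_ne_zero n) p hp.ne_one
  have hv : v ≤ n := by
    have h1 := sub_one_mul_padicValNat_factorial (p := p) n
    have h2 : v ≤ padicValNat p n.factorial :=
      (padicValNat_dvd_iff_le (Nat.factorial_ne_zero n)).1 ⟨m, h⟩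
    have h3 : 1 ≤ p - 1 := by have := hp.two_le; omega
    have h4 : 1 * padicValNat p n.factorial ≤ (p - 1) * padicValNat p n.factorial :=
      Nat.mul_le_mul_right _ h3
    omega
  have hm1 : 1 ≤ ‖(m : K)‖ := by
    by_contra! hlt
    have hc : Nat.Coprime m p := ((Nat.Prime.coprime_iff_not_dvd hp).2 hm).symm
    have hb := Nat.gcd_eq_gcd_ab m p
    rw [Nat.Coprime.gcd_eq_one hc] at hb
    have hb' : (1 : K) = (m : K) * ((Nat.gcdA m p : ℤ) : K) + (p : K) * ((Nat.gcdB m p : ℤ) : K) := by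
      have := congrArg (fun z : ℤ => (z : K)) hb
      push_cast at this
      exact this
    have h1 : ‖(1 : K)‖ ≤ _ := hb' ▸ IsUltrametricDist.norm_add_le_max _ _
    rw [norm_one, norm_mul, norm_mul] at h1
    have i1 := IsUltrametricDist.norm_intCast_le_one K (Nat.gcdA m p)
    have i2 := IsUltrametricDist.norm_intCast_le_one K (Nat.gcdB m p)
    have j1 := mul_le_of_le_one_right (norm_nonneg (m : K)) i1
    have j2 := mul_le_of_le_one_right (norm_nonneg (p : K)) i2
    rcases le_max_iff.1 h1 with h | h <;> linarith
  rw [h]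
  push_cast
  rw [norm_mul, norm_pow]
  calc ‖(p : K)‖ ^ n ≤ ‖(p : K)‖ ^ v := pow_le_pow_of_le_one (norm_nonneg _) hpn.le hv
    _ ≤ _ := le_mul_of_one_le_right (by positivity) hm1

lemma aux_bound {K : Type*} [NormedField K] [IsUltrametricDist K]
    (α : K) (hα : ∀ s : ℕ, α ≠ (s : K)) (ρ B : ℝ) (h0 : 0 < ρ) (h1 : ρ ≤ 1)
    (hB : ∀ s : ℕ, ρ ^ s * ‖α - (s : K)‖⁻¹ ≤ B) (n : ℕ) : ∀ a : ℕ,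
    ρ ^ (a + n) * (‖((n.factorial : ℕ) : K)‖ *
      ‖(∏ i ∈ Finset.range (n + 1), (((a + i : ℕ) : K) - α))⁻¹‖) ≤ B := by
  induction n with
  | zero => intro a; simpa [norm_sub_rev] using hB a
  | succ n ih =>
    intro a
    have hne : ∀ j : ℕ, (j : K) - α ≠ 0 := fun j => sub_ne_zero.2 (hα j).symm
    set F : ℕ → ℕ → K := fun a n => (∏ i ∈ Finset.range (n + 1), (((a + i : ℕ) : K) - α))⁻¹ with hF
    have key : ((n + 1 : ℕ) : K) * F a (n + 1) = F a n - F (a + 1) n := by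
      have e1 : F a (n + 1) = F a n * (((a + (n + 1) : ℕ) : K) - α)⁻¹ := by
        simp only [hF]; rw [Finset.prod_range_succ _ (n + 1), mul_inv]
      have e2 : F a (n + 1) = F (a + 1) n * ((a : K) - α)⁻¹ := by
        simp only [hF]; rw [Finset.prod_range_succ' _ (n + 1), mul_inv]
        simp only [add_zero]
        congr 3 with i
        congr 2
        ring
      have f1 : F a n = F a (n + 1) * (((a + (n + 1) : ℕ) : K) - α) := by
        rw [e1, inv_mul_cancel_right₀ (hne _)]
      have f2 : F (a + 1) n = F a (n + 1) * ((a : K) - α) := by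
        rw [e2, inv_mul_cancel_right₀ (hne _)]
      rw [f1, f2]; push_cast; ring
    have hmax : ‖((n + 1 : ℕ) : K)‖ * ‖F a (n + 1)‖ ≤ max ‖F a n‖ ‖F (a + 1) n‖ := by
      rw [← norm_mul, key, sub_eq_add_neg, ← norm_neg (F (a + 1) n)]
      exact IsUltrametricDist.norm_add_le_max _ _
    have i1 : ρ ^ (a + n) * (‖((n.factorial : ℕ) : K)‖ * ‖F a n‖) ≤ B := ih a
    have i2 : ρ ^ (a + 1 + n) * (‖((n.factorial : ℕ) : K)‖ * ‖F (a + 1) n‖) ≤ B := ih (a + 1)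
    have i1' : ρ ^ (a + (n + 1)) * (‖((n.factorial : ℕ) : K)‖ * ‖F a n‖) ≤ B :=
      le_trans (mul_le_mul_of_nonneg_right
        (pow_le_pow_of_le_one h0.le h1 (by omega)) (by positivity)) i1
    rw [show a + 1 + n = a + (n + 1) by ring] at i2
    change ρ ^ (a + (n + 1)) * (‖(((n + 1).factorial : ℕ) : K)‖ * ‖F a (n + 1)‖) ≤ B
    have e : ρ ^ (a + (n + 1)) * (‖(((n + 1).factorial : ℕ) : K)‖ * ‖F a (n + 1)‖)
      = ρ ^ (a + (n + 1)) * (‖((n.factorial : ℕ) : K)‖ *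
        (‖((n + 1 : ℕ) : K)‖ * ‖F a (n + 1)‖)) := by
      rw [Nat.factorial_succ, Nat.cast_mul, norm_mul]; ring
    rw [e]
    rcases le_max_iff.1 hmax with h | h
    · exact le_trans (by gcongr) i1'
    · exact le_trans (by gcongr) i2


/-- **Positive radius of convergence of `∑ X^s / ∏_{i=1}^s (i - α)` (from Lemma 3.2.8).**
Let `K` be a complete nonarchimedean field of characteristic zero with `‖p‖ < 1` for a
prime `p`.  If `α ∈ K` is not a natural number and has positive type (i.e. there is
`ρ ∈ (0,1]` with `sup_s ρ^s ‖α - s‖⁻¹ < ∞`), then there exists `ρ' > 0` with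
`sup_s ρ'^s ‖∏_{i=1}^s (i - α)‖⁻¹ < ∞`. -/
theorem stmt4 (K : Type*) [NormedField K] [IsUltrametricDist K] [CompleteSpace K]
    [CharZero K]
    (p : ℕ) (hp : p.Prime) (hpnorm : ‖(p : K)‖ < 1)
    (α : K) (hα : ∀ s : ℕ, α ≠ (s : K))
    (htype : ∃ ρ : ℝ, 0 < ρ ∧ ρ ≤ 1 ∧ ∃ B : ℝ, ∀ s : ℕ, ρ ^ s * ‖α - (s : K)‖⁻¹ ≤ B) :
    ∃ ρ' : ℝ, 0 < ρ' ∧ ∃ B : ℝ,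
      ∀ s : ℕ, ρ' ^ s * ‖∏ i ∈ Finset.Icc 1 s, ((i : K) - α)‖⁻¹ ≤ B := by
  obtain ⟨ρ, h0, h1, B, hB⟩ := htype
  have hp0 : 0 < ‖(p : K)‖ := norm_pos_iff.2 (Nat.cast_ne_zero.2 hp.ne_zero)
  refine ⟨ρ * ‖(p : K)‖, by positivity, max B 1, ?_⟩
  intro s
  cases s with
  | zero => simp
  | succ n =>
    refine le_trans ?_ (le_max_left _ _)
    have hb := aux_bound α hα ρ B h0 h1 hB n 1
    have hprod : ∏ i ∈ Finset.Icc 1 (n + 1), ((i : K) - α)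
        = ∏ i ∈ Finset.range (n + 1), (((1 + i : ℕ) : K) - α) := by
      rw [← Finset.Ico_add_one_right_eq_Icc, Finset.prod_Ico_eq_prod_range]
      simp
    rw [hprod, ← norm_inv, mul_pow, mul_assoc]
    refine le_trans ?_ hb
    rw [add_comm 1 n]
    have hf := aux_fact (K := K) p hp hpnorm n
    have hpp : ‖(p : K)‖ ^ (n + 1) ≤ ‖(p : K)‖ ^ n :=
      pow_le_pow_of_le_one hp0.le hpnorm.le (by omega)
    have := hpp.trans hf
    gcongr
end

section
/- Let p be a prime and m ≥ 1 an integer. Let σ, τ ∈ ℤ_p be p-adically non-Liouville, and assume each of σ and τ is either 0 or not a rational integer (so in particular j + σ ≠ 0 for every integer j ≥ 1). For l ∈ ℕ and j' ∈ ℤ, let s_α^{j',l} ∈ ℚ_p denote the coefficient of x^α in the polynomial ∏_{j=1}^l ((j + j' + τ) + x)/(j + σ) ∈ ℚ_p[x]. Then for every real δ > 1 there exists C > 0 such that |s_α^{j',l}|_p ≤ C·δ^{(2m−1)·|j'|} for all 0 ≤ α ≤ m−1, all l ∈ ℕ, and all j' ∈ ℤ with |j'| > l. -/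
open Polynomial

/-- `a ∈ ℤ_p` is `p`-adically non-Liouville: for every `δ > 1` there is `C > 0` with
`‖a + s‖⁻¹ ≤ C δ^{|s|}` for every integer `s` with `a + s ≠ 0`. -/
def IsPAdicNonLiouville {p : ℕ} [Fact p.Prime] (a : ℤ_[p]) : Prop :=
  ∀ δ : ℝ, 1 < δ → ∃ C : ℝ, 0 < C ∧
    ∀ s : ℤ, (a : ℚ_[p]) + (s : ℚ_[p]) ≠ 0 → ‖(a : ℚ_[p]) + (s : ℚ_[p])‖⁻¹ ≤ C * δ ^ s.natAbs

noncomputable section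

/-- the layer function -/
def gLayer {p : ℕ} [Fact p.Prime] (k : ℕ) (x : ℤ_[p]) : ℝ :=
  open Classical in if ‖x‖ ≤ ((p : ℝ)⁻¹) ^ k then (p : ℝ)⁻¹ else 1

lemma gLayer_prod {p : ℕ} [Fact p.Prime] (K : ℕ) (x : ℤ_[p]) :
    ∏ k ∈ Finset.Icc 1 K, gLayer k x = max ‖x‖ (((p : ℝ)⁻¹) ^ K) := by
  have hp1 : (1 : ℝ) < p := by exact_mod_cast (Fact.out : p.Prime).one_lt
  induction K with
  | zero => simpa using x.norm_le_one
  | succ K ih =>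
    rw [Finset.prod_Icc_succ_top (by omega), ih, gLayer]
    have hq : (p : ℝ)⁻¹ < 1 := inv_lt_one_of_one_lt₀ hp1
    have hq0 : 0 < (p : ℝ)⁻¹ := by positivity
    have hle : ((p : ℝ)⁻¹) ^ (K + 1) ≤ ((p : ℝ)⁻¹) ^ K :=
      pow_le_pow_of_le_one hq0.le hq.le (by omega)
    split_ifs with h
    · rw [max_eq_right (h.trans hle), max_eq_right h, pow_succ]
    · have h2 := PadicInt.norm_le_pow_iff_norm_lt_pow_add_one x (-((K + 1 : ℕ) : ℤ))
      have e1 : (p : ℝ) ^ (-((K + 1 : ℕ) : ℤ)) = ((p : ℝ)⁻¹) ^ (K + 1) := by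
        rw [zpow_neg, zpow_natCast, inv_pow]
      have e2 : (p : ℝ) ^ (-((K + 1 : ℕ) : ℤ) + 1) = ((p : ℝ)⁻¹) ^ K := by
        rw [show -((K + 1 : ℕ) : ℤ) + 1 = -(K : ℤ) by push_cast; ring, zpow_neg, zpow_natCast,
          inv_pow]
      rw [e1, e2] at h2
      have h3 : ((p : ℝ)⁻¹) ^ K ≤ ‖x‖ := by
        by_contra hc
        exact h (h2.2 (not_le.1 hc))
      rw [max_eq_left h3, max_eq_left (not_le.1 h).le, mul_one]

open Classical in
/-- counting -/
lemma count_bounds {p : ℕ} [Fact p.Prime] (k l : ℕ) (a : ℤ_[p]) :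
    ⌊(l : ℚ) / ((p ^ k : ℕ) : ℚ)⌋ ≤
      (((Finset.Icc 1 l).filter fun j : ℕ => ‖(j : ℤ_[p]) + a‖ ≤ ((p : ℝ)⁻¹) ^ k).card : ℤ) ∧
    (((Finset.Icc 1 l).filter fun j : ℕ => ‖(j : ℤ_[p]) + a‖ ≤ ((p : ℝ)⁻¹) ^ k).card : ℤ) ≤
    ⌊(l : ℚ) / ((p ^ k : ℕ) : ℚ)⌋ + 1 := by
  have hp0 : 0 < p ^ k := pow_pos (Fact.out : p.Prime).pos k
  haveI : NeZero (p ^ k) := ⟨hp0.ne'⟩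
  set v : ℕ := (-(PadicInt.toZModPow k a)).val with hv
  have key : ∀ j : ℕ, ‖(j : ℤ_[p]) + a‖ ≤ ((p : ℝ)⁻¹) ^ k ↔ j ≡ v [MOD p ^ k] := by
    intro j
    have e1 : (p : ℝ) ^ (-(k : ℤ)) = ((p : ℝ)⁻¹) ^ k := by
      rw [zpow_neg, zpow_natCast, inv_pow]
    rw [← e1, PadicInt.norm_le_pow_iff_mem_span_pow, ← PadicInt.ker_toZModPow, RingHom.mem_ker,
      ← ZMod.natCast_eq_natCast_iff, hv, ZMod.natCast_zmod_val, map_add, map_natCast,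
      eq_neg_iff_add_eq_zero]
  simp only [key]
  have hI : Finset.Icc 1 l = Finset.Ioc 0 l := by ext; simp; omega
  have hr : (0 : ℚ) < ((p ^ k : ℕ) : ℚ) := by exact_mod_cast hp0
  rw [hI, Nat.Ioc_filter_modEq_card 0 l hp0 v]
  have hs : ((l : ℚ) - v) / ((p ^ k : ℕ) : ℚ)
      = (l : ℚ) / ((p ^ k : ℕ) : ℚ) + (((0 : ℕ) : ℚ) - v) / ((p ^ k : ℕ) : ℚ) := by
    rw [← add_div]; congr 1; push_cast; ring
  rw [hs]
  generalize (((0 : ℕ) : ℚ) - v) / ((p ^ k : ℕ) : ℚ) = A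
  have hB : 0 ≤ ⌊(l : ℚ) / ((p ^ k : ℕ) : ℚ)⌋ := Int.floor_nonneg.2 (by positivity)
  generalize (l : ℚ) / ((p ^ k : ℕ) : ℚ) = B at hB ⊢
  have h1 := Int.le_floor_add B A
  have h2 := Int.le_floor_add_floor B A
  constructor
  · exact le_max_of_le_left (by linarith)
  · exact max_le (by linarith) (by linarith)

lemma gLayer_prod_set {p : ℕ} [Fact p.Prime] (k l α : ℕ) (a b : ℤ_[p]) (t : Finset ℕ)
    (ht : t ⊆ Finset.Icc 1 l) (hc : l ≤ t.card + α) :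
    ∏ j ∈ t, gLayer k ((j : ℤ_[p]) + a) ≤
      (p : ℝ) ^ (α + 1) * ∏ j ∈ Finset.Icc 1 l, gLayer k ((j : ℤ_[p]) + b) := by
  classical
  have hp1 : (1 : ℝ) < p := by exact_mod_cast (Fact.out : p.Prime).one_lt
  unfold gLayer
  rw [Finset.prod_ite, Finset.prod_ite]
  simp only [Finset.prod_const, one_pow, mul_one]
  have ha := (count_bounds k l a).1
  have hb := (count_bounds k l b).2
  set P : ℕ → Prop := fun j => ‖(j : ℤ_[p]) + a‖ ≤ ((p : ℝ)⁻¹) ^ k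
  have h3 : ((Finset.Icc 1 l).filter P).card ≤ (t.filter P).card + α := by
    have : (Finset.Icc 1 l).filter P ⊆ t.filter P ∪ (Finset.Icc 1 l \ t) := by
      intro x hx
      simp only [Finset.mem_union, Finset.mem_filter, Finset.mem_sdiff] at hx ⊢
      tauto
    have h4 := (Finset.card_le_card this).trans (Finset.card_union_le _ _)
    have h5 := Finset.card_sdiff_add_card_eq_card ht
    rw [Nat.card_Icc] at h5
    omega
  have h6 : ((Finset.Icc 1 l).filter fun j : ℕ => ‖(j : ℤ_[p]) + b‖ ≤ ((p : ℝ)⁻¹) ^ k).card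
      ≤ (t.filter P).card + (α + 1) := by
    have := ha
    zify at h3 ⊢
    linarith
  generalize ((Finset.Icc 1 l).filter fun j : ℕ => ‖(j : ℤ_[p]) + b‖ ≤ ((p : ℝ)⁻¹) ^ k).card = N
    at h6 ⊢
  generalize (t.filter P).card = M at h6 ⊢
  rw [inv_pow, inv_pow, ← div_eq_mul_inv, le_div_iff₀ (by positivity), inv_mul_le_iff₀ (by positivity),
    ← pow_add]
  exact pow_le_pow_right₀ hp1.le h6

lemma main_ratio {p : ℕ} [Fact p.Prime] (K l α : ℕ) (a b : ℤ_[p]) (t : Finset ℕ)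
    (ht : t ⊆ Finset.Icc 1 l) (hc : l ≤ t.card + α)
    (hb : ∀ j ∈ Finset.Icc 1 l, ((p : ℝ)⁻¹) ^ K ≤ ‖(j : ℤ_[p]) + b‖) :
    ∏ j ∈ t, ‖(j : ℤ_[p]) + a‖ ≤
      ((p : ℝ) ^ K) ^ (α + 1) * ∏ j ∈ Finset.Icc 1 l, ‖(j : ℤ_[p]) + b‖ := by
  have hg : ∀ (k : ℕ) (x : ℤ_[p]), 0 ≤ gLayer k x := by
    intro k x; unfold gLayer; split_ifs <;> positivity
  calc ∏ j ∈ t, ‖(j : ℤ_[p]) + a‖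
      ≤ ∏ j ∈ t, ∏ k ∈ Finset.Icc 1 K, gLayer k ((j : ℤ_[p]) + a) := by
        refine Finset.prod_le_prod (fun _ _ => norm_nonneg _) fun j _ => ?_
        rw [gLayer_prod]; exact le_max_left _ _
    _ = ∏ k ∈ Finset.Icc 1 K, ∏ j ∈ t, gLayer k ((j : ℤ_[p]) + a) := Finset.prod_comm
    _ ≤ ∏ k ∈ Finset.Icc 1 K, ((p : ℝ) ^ (α + 1) *
          ∏ j ∈ Finset.Icc 1 l, gLayer k ((j : ℤ_[p]) + b)) :=
        Finset.prod_le_prod (fun k _ => Finset.prod_nonneg fun j _ => hg _ _)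
          fun k _ => gLayer_prod_set k l α a b t ht hc
    _ = ((p : ℝ) ^ K) ^ (α + 1) *
          ∏ j ∈ Finset.Icc 1 l, ∏ k ∈ Finset.Icc 1 K, gLayer k ((j : ℤ_[p]) + b) := by
        rw [Finset.prod_mul_distrib, Finset.prod_const, Nat.card_Icc, Nat.add_sub_cancel,
          Finset.prod_comm, ← pow_mul, ← pow_mul, mul_comm K]
    _ = _ := by
        congr 1
        refine Finset.prod_congr rfl fun j hj => ?_
        rw [gLayer_prod, max_eq_left (hb j hj)]

lemma coeff_formula {F : Type*} [Field F] (l α : ℕ) (u w : ℕ → F) :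
    (∏ j ∈ Finset.Icc 1 l, (Polynomial.C (u j / w j) + Polynomial.C ((w j)⁻¹) * Polynomial.X)).coeff α
      = (∏ j ∈ Finset.Icc 1 l, (w j)⁻¹) *
        (∏ j ∈ Finset.Icc 1 l, (Polynomial.X + Polynomial.C (u j))).coeff α := by
  rw [← Polynomial.coeff_C_mul, map_prod, ← Finset.prod_mul_distrib]
  congr 1
  refine Finset.prod_congr rfl fun j _ => ?_
  rw [div_eq_mul_inv, map_mul]; ring

end

theorem stmt5 (p : ℕ) [Fact p.Prime] (m : ℕ) (hm : 1 ≤ m)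
    (σ τ : ℤ_[p])
    (hσNL : IsPAdicNonLiouville σ) (hτNL : IsPAdicNonLiouville τ)
    (hσ : σ = 0 ∨ ∀ i : ℤ, (σ : ℚ_[p]) ≠ (i : ℚ_[p]))
    (hτ : τ = 0 ∨ ∀ i : ℤ, (τ : ℚ_[p]) ≠ (i : ℚ_[p])) :
    ∀ δ : ℝ, 1 < δ → ∃ C : ℝ, 0 < C ∧
      ∀ α : ℕ, α ≤ m - 1 → ∀ l : ℕ, ∀ j' : ℤ, (l : ℤ) < |j'| →
        ‖(∏ j ∈ Finset.Icc 1 l,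
            (Polynomial.C ((((j : ℚ_[p]) + (j' : ℚ_[p]) + (τ : ℚ_[p])) /
              ((j : ℚ_[p]) + (σ : ℚ_[p])))) +
             Polynomial.C (((j : ℚ_[p]) + (σ : ℚ_[p]))⁻¹) * Polynomial.X)).coeff α‖
          ≤ C * δ ^ ((2 * m - 1) * j'.natAbs) := by
  intro δ hδ
  have hp1 : (1 : ℝ) < p := by exact_mod_cast (Fact.out : p.Prime).one_lt
  obtain ⟨C₀, hC₀, hC⟩ := hσNL δ hδ
  refine ⟨(max C₀ 1) ^ m, by positivity, ?_⟩
  intro α hα l j' hl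
  have hne : ∀ j ∈ Finset.Icc 1 l, (j : ℚ_[p]) + (σ : ℚ_[p]) ≠ 0 := by
    intro j hj h0
    have hj1 := (Finset.mem_Icc.1 hj).1
    rcases hσ with h | h
    · rw [h] at h0
      simp at h0
      omega
    · apply h (-(j : ℤ))
      push_cast
      exact eq_neg_of_add_eq_zero_right h0
  set n := j'.natAbs with hn
  have hln : l ≤ n := by
    rw [Int.abs_eq_natAbs] at hl
    omega
  set B : ℝ := max C₀ 1 * δ ^ n with hB
  have hB1 : 1 ≤ B := by
    have := one_le_pow₀ hδ.le (n := n)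
    have h2 := le_max_right C₀ 1
    exact one_le_mul_of_one_le_of_one_le h2 this
  obtain ⟨K, hK1, hK2⟩ := exists_nat_pow_near hB1 hp1
  have hbK : ∀ j ∈ Finset.Icc 1 l, ((p : ℝ)⁻¹) ^ K ≤ ‖(j : ℤ_[p]) + σ‖ := by
    intro j hj
    have h1 := hC j (by rw [add_comm]; exact_mod_cast hne j hj)
    have hjl := (Finset.mem_Icc.1 hj).2
    have e : ‖(σ : ℚ_[p]) + ((j : ℤ) : ℚ_[p])‖ = ‖(j : ℤ_[p]) + σ‖ := by
      rw [PadicInt.norm_def, add_comm]; push_cast; rfl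
    have hpos : 0 < ‖(j : ℤ_[p]) + σ‖ := by
      rw [← e, norm_pos_iff, add_comm]; exact_mod_cast hne j hj
    rw [e, Int.natAbs_natCast] at h1
    have h2 : ‖(j : ℤ_[p]) + σ‖⁻¹ ≤ B := by
      refine h1.trans ?_
      have := pow_le_pow_right₀ hδ.le (hjl.trans hln)
      exact mul_le_mul (le_max_left _ _) this (by positivity) (by positivity)
    have h3 := h2.trans_lt hK2
    by_contra hcon
    have hcon := not_le.1 hcon
    have h4 := (PadicInt.norm_le_pow_iff_norm_lt_pow_add_one ((j : ℤ_[p]) + σ)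
      (-((K + 1 : ℕ) : ℤ))).2 (by
        rw [show -((K + 1 : ℕ) : ℤ) + 1 = -(K : ℤ) by push_cast; ring, zpow_neg, zpow_natCast,
          ← inv_pow]
        exact hcon)
    rw [zpow_neg, zpow_natCast] at h4
    have h5 := (le_inv_comm₀ (by positivity) hpos).2 h4
    linarith
  rw [coeff_formula l α (fun j => (j : ℚ_[p]) + (j' : ℚ_[p]) + (τ : ℚ_[p]))
    (fun j => (j : ℚ_[p]) + (σ : ℚ_[p]))]
  have hfin : B ^ (α + 1) ≤ (max C₀ 1) ^ m * δ ^ ((2 * m - 1) * n) := by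
    calc B ^ (α + 1) ≤ B ^ m := pow_le_pow_right₀ hB1 (by omega)
      _ = (max C₀ 1) ^ m * δ ^ (m * n) := by rw [hB, mul_pow, ← pow_mul, mul_comm n]
      _ ≤ _ := by
        gcongr
        · exact hδ.le
        · omega
  have hcardI : (Finset.Icc 1 l).card = l := by simp
  by_cases hαl : α ≤ l
  · rw [Finset.prod_X_add_C_coeff _ _ (by rw [hcardI]; exact hαl), Finset.mul_sum]
    refine IsUltrametricDist.norm_sum_le_of_forall_le_of_nonneg (by positivity) fun t ht => ?_
    rw [Finset.mem_powersetCard, hcardI] at ht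
    refine le_trans ?_ hfin
    have hm' := main_ratio K l α ((j' : ℤ_[p]) + τ) σ t ht.1 (by omega) hbK
    have hnum : ∀ j : ℕ, ‖(j : ℚ_[p]) + (j' : ℚ_[p]) + (τ : ℚ_[p])‖
        = ‖(j : ℤ_[p]) + ((j' : ℤ_[p]) + τ)‖ := by
      intro j; rw [PadicInt.norm_def, ← add_assoc]; push_cast; rfl
    have hden : ∀ j : ℕ, ‖(j : ℚ_[p]) + (σ : ℚ_[p])‖ = ‖(j : ℤ_[p]) + σ‖ := by
      intro j; rw [PadicInt.norm_def]; push_cast; rfl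
    have hDpos : 0 < ∏ j ∈ Finset.Icc 1 l, ‖(j : ℤ_[p]) + σ‖ :=
      Finset.prod_pos fun j hj => by rw [← hden]; exact norm_pos_iff.2 (hne j hj)
    rw [norm_mul, norm_prod, norm_prod]
    simp only [norm_inv, hnum, hden, Finset.prod_inv_distrib]
    rw [inv_mul_le_iff₀ hDpos, mul_comm]
    refine hm'.trans ?_
    gcongr
  · rw [Polynomial.coeff_eq_zero_of_natDegree_lt, mul_zero, norm_zero]
    · positivity
    · rw [Polynomial.natDegree_prod_of_monic _ _ fun j _ => Polynomial.monic_X_add_C _]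
      simp only [Polynomial.natDegree_X_add_C, Finset.sum_const, hcardI, smul_eq_mul, mul_one]
      omega
end

section
/- Let p be a prime, m ≥ 1 and n₀ ≥ 1 integers. Let ξ', ξ_1, …, ξ_{n₀} ∈ ℤ_p be such that for every k the differences ξ_1 − ξ_k and ξ_k − ξ' are p-adically non-Liouville and each is either 0 or not a rational integer (so the denominators j ± (ξ_1 − ξ_k) for j ≥ 1 are nonzero). Let Q ∈ ℤ_p[x] be a polynomial. For l ∈ ℕ and j' ∈ ℤ, let c_α^{j',l} ∈ ℚ_p denote the coefficient of x^α in the polynomial Q(x + ξ' + j') · ∏_{k=1}^{n₀} ∏_{j=1}^{l} [ ((j − j' + ξ_k − ξ') − x)/(j − (ξ_1 − ξ_k)) · ((j + j' − ξ_k + ξ') + x)/(j + (ξ_1 − ξ_k)) ]^m ∈ ℚ_p[x]. Then there exists a constant A > 0 such that for every real δ > 1 there exists C > 0 with |c_α^{j',l}|_p ≤ C·δ^{A·|j'|} for all 0 ≤ α ≤ m−1, all l ∈ ℕ, and all j' ∈ ℤ with |j'| > l. -/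
open Polynomial

/-- The polynomial
`Q(x + ξ' + j') ∏_{k=1}^{n₀} ∏_{j=1}^{l} [((j - j' + ξ_k - ξ') - x)/(j - (ξ_1 - ξ_k)) ·
((j + j' - ξ_k + ξ') + x)/(j + (ξ_1 - ξ_k))]^m ∈ ℚ_p[x]`
appearing in claim 3 of the proof of Lemma 3.4.1 (with `ξ_1 = ξ 0`). -/
noncomputable def claim3Poly (p : ℕ) [Fact p.Prime] (m n₀ : ℕ) (hn₀ : 0 < n₀)
    (ξ' : ℤ_[p]) (ξ : Fin n₀ → ℤ_[p]) (Q : Polynomial ℤ_[p]) (j' : ℤ) (l : ℕ) :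
    Polynomial ℚ_[p] :=
  (Q.map (PadicInt.Coe.ringHom)).comp
      (Polynomial.X + Polynomial.C ((ξ' : ℚ_[p]) + (j' : ℚ_[p]))) *
    ∏ k : Fin n₀, ∏ j ∈ Finset.Icc 1 l,
      ((Polynomial.C (((j : ℚ_[p]) - ((ξ ⟨0, hn₀⟩ : ℚ_[p]) - (ξ k : ℚ_[p])))⁻¹) *
          (Polynomial.C ((j : ℚ_[p]) - (j' : ℚ_[p]) + (ξ k : ℚ_[p]) - (ξ' : ℚ_[p])) -
            Polynomial.X)) *
        (Polynomial.C (((j : ℚ_[p]) + ((ξ ⟨0, hn₀⟩ : ℚ_[p]) - (ξ k : ℚ_[p])))⁻¹) *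
          (Polynomial.C ((j : ℚ_[p]) + (j' : ℚ_[p]) - (ξ k : ℚ_[p]) + (ξ' : ℚ_[p])) +
            Polynomial.X))) ^ m

/-- Weighted coefficient bound. -/
def GB {p : ℕ} [Fact p.Prime] (B R : ℝ) (f : Polynomial ℚ_[p]) : Prop :=
  ∀ α : ℕ, ‖f.coeff α‖ ≤ B * R ^ α

lemma GB.nonneg {p : ℕ} [Fact p.Prime] {B R : ℝ} {f : Polynomial ℚ_[p]} (h : GB B R f) :
    0 ≤ B := by
  have := (norm_nonneg _).trans (h 0)
  simpa using this

lemma GB.mul {p : ℕ} [Fact p.Prime] {B B' R : ℝ} (hR : 0 ≤ R) {f g : Polynomial ℚ_[p]}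
    (hf : GB B R f) (hg : GB B' R g) : GB (B * B') R (f * g) := by
  intro α
  have h1 := hf.nonneg
  have h2 := hg.nonneg
  rw [Polynomial.coeff_mul]
  apply IsUltrametricDist.norm_sum_le_of_forall_le_of_nonneg (by positivity)
  rintro ⟨i, j⟩ hij
  rw [Finset.HasAntidiagonal.mem_antidiagonal] at hij
  simp only at hij ⊢
  rw [norm_mul, ← hij, pow_add]
  calc ‖f.coeff i‖ * ‖g.coeff j‖ ≤ (B * R ^ i) * (B' * R ^ j) :=
        mul_le_mul (hf i) (hg j) (norm_nonneg _) (by positivity)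
    _ = _ := by ring

lemma GB.mono {p : ℕ} [Fact p.Prime] {B B' R : ℝ} (hR : 0 ≤ R) {f : Polynomial ℚ_[p]}
    (hf : GB B R f) (h : B ≤ B') : GB B' R f :=
  fun α => (hf α).trans (mul_le_mul_of_nonneg_right h (by positivity))

lemma GB.C {p : ℕ} [Fact p.Prime] {R : ℝ} (hR : 0 ≤ R) (a : ℚ_[p]) :
    GB ‖a‖ R (Polynomial.C a) := by
  intro α
  rw [Polynomial.coeff_C]
  split_ifs with h
  · simp [h]
  · simp; positivity

lemma GB.prod {p : ℕ} [Fact p.Prime] {R : ℝ} (hR : 0 ≤ R) {ι : Type*} (s : Finset ι)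
    (B : ι → ℝ) (f : ι → Polynomial ℚ_[p]) (h : ∀ i ∈ s, GB (B i) R (f i)) :
    GB (∏ i ∈ s, B i) R (∏ i ∈ s, f i) := by
  classical
  induction s using Finset.induction_on with
  | empty => simpa using GB.C (p := p) hR 1
  | insert a s ha ih =>
    rw [Finset.prod_insert ha, Finset.prod_insert ha]
    exact GB.mul hR (h a (by simp)) (ih fun i hi => h i (by simp [hi]))

lemma GB.pow {p : ℕ} [Fact p.Prime] {B R : ℝ} (hR : 0 ≤ R) {f : Polynomial ℚ_[p]}
    (hf : GB B R f) (m : ℕ) : GB (B ^ m) R (f ^ m) := by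
  have := GB.prod hR (Finset.range m) (fun _ => B) (fun _ => f) (fun _ _ => hf)
  simpa using this

lemma den_aux {p : ℕ} [Fact p.Prime] (B : ℝ) (n : ℕ) : ∀ c : ℚ_[p],
    (∀ j : ℕ, j ≤ n → c + j ≠ 0 ∧ ‖c + j‖⁻¹ ≤ B) →
    ‖(n.factorial : ℚ_[p]) * (∏ j ∈ Finset.range (n + 1), (c + j))⁻¹‖ ≤ B := by
  induction n with
  | zero => intro c h; simpa using (h 0 le_rfl).2
  | succ n ih =>
    intro c h
    have e1 := ih c (fun j hj => h j (by omega))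
    have e2 := ih (c + 1) (fun j hj => by
      have := h (j + 1) (by omega)
      push_cast at this
      rwa [show c + 1 + (j : ℚ_[p]) = c + (j + 1) by ring])
    have key : ((n + 1).factorial : ℚ_[p]) * (∏ j ∈ Finset.range (n + 1 + 1), (c + j))⁻¹
        = (n.factorial : ℚ_[p]) * (∏ j ∈ Finset.range (n + 1), (c + j))⁻¹ -
          (n.factorial : ℚ_[p]) * (∏ j ∈ Finset.range (n + 1), (c + 1 + j))⁻¹ := by
      have hP : ∏ j ∈ Finset.range n, (c + 1 + (j : ℚ_[p])) ≠ 0 := by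
        rw [Finset.prod_ne_zero_iff]
        intro j hj
        rw [Finset.mem_range] at hj
        have := (h (j + 1) (by omega)).1
        push_cast at this
        rwa [show c + 1 + (j : ℚ_[p]) = c + (j + 1) by ring]
      have hc : c ≠ 0 := by simpa using (h 0 (by omega)).1
      have hn : c + 1 + (n : ℚ_[p]) ≠ 0 := by
        have := (h (n + 1) (by omega)).1
        push_cast at this
        rwa [show c + 1 + (n : ℚ_[p]) = c + (n + 1) by ring]
      have s : ∀ k : ℕ, ∏ j ∈ Finset.range (k + 1), (c + (j : ℚ_[p]))
          = (∏ j ∈ Finset.range k, (c + 1 + (j : ℚ_[p]))) * c := by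
        intro k
        rw [Finset.prod_range_succ']
        simp only [Nat.cast_zero, add_zero]
        congr 1
        apply Finset.prod_congr rfl
        intro j _
        push_cast; ring
      rw [s (n + 1), s n, Finset.prod_range_succ, Nat.factorial_succ]
      set P := ∏ j ∈ Finset.range n, (c + 1 + (j : ℚ_[p])) with hPdef
      push_cast
      field_simp
      ring
    rw [key]
    rw [sub_eq_add_neg]
    refine (IsUltrametricDist.norm_add_le_max _ _).trans (max_le e1 ?_)
    rw [norm_neg]
    exact e2

lemma den_bound {p : ℕ} [Fact p.Prime] (B : ℝ) (hB : 1 ≤ B) (l : ℕ) (d : ℚ_[p])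
    (h : ∀ j ∈ Finset.Icc 1 l, (j : ℚ_[p]) + d ≠ 0 ∧ ‖(j : ℚ_[p]) + d‖⁻¹ ≤ B) :
    ‖∏ j ∈ Finset.Icc 1 l, ((j : ℚ_[p]) + d)⁻¹‖ * ‖(l.factorial : ℚ_[p])‖ ≤ B := by
  rcases l with _ | n
  · simpa using hB
  have := den_aux B n (d + 1) (fun j hj => by
    have := h (j + 1) (by simp; omega)
    push_cast at this
    rwa [show d + 1 + (j : ℚ_[p]) = j + 1 + d by ring])
  have e : ∏ j ∈ Finset.Icc 1 (n + 1), ((j : ℚ_[p]) + d)⁻¹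
      = (∏ j ∈ Finset.range (n + 1), (d + 1 + (j : ℚ_[p])))⁻¹ := by
    rw [← Finset.prod_inv_distrib, Finset.range_eq_Ico, ← Finset.Ico_add_one_right_eq_Icc,
      ← Finset.prod_Ico_add' _ 0 (n + 1) 1]
    apply Finset.prod_congr rfl
    intro j _
    push_cast
    congr 1; ring
  rw [e, mul_comm, Nat.factorial_succ, ← norm_mul]
  push_cast
  rw [mul_assoc, norm_mul]
  have h1 : ‖(n : ℚ_[p]) + 1‖ ≤ 1 := by
    have := Padic.norm_int_le_one (p := p) (n + 1 : ℤ)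
    simpa using this
  calc _ ≤ 1 * B := mul_le_mul h1 this (norm_nonneg _) zero_le_one
    _ = B := one_mul _

lemma num_bound {p : ℕ} [Fact p.Prime] (l : ℕ) (R : ℝ) (hR1 : (p : ℝ) ≤ R)
    (hR : (p : ℝ) * l ≤ R) (c : ℤ_[p]) (ε : ℚ_[p]) (hε : ‖ε‖ ≤ 1) :
    GB ‖(l.factorial : ℚ_[p])‖ R
      (∏ j ∈ Finset.Icc 1 l, (C ((j : ℚ_[p]) + (c : ℚ_[p])) + C ε * X)) := by
  have hp : p.Prime := Fact.out
  have hp1 : (1 : ℝ) ≤ p := by exact_mod_cast hp.one_lt.le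
  have hR0 : 0 ≤ R := by linarith
  obtain ⟨N, hlN, hNR⟩ : ∃ N : ℕ, l ≤ p ^ N ∧ (p : ℝ) ^ N ≤ R := by
    refine ⟨Nat.log p l + 1, (Nat.lt_pow_succ_log_self hp.one_lt l).le, ?_⟩
    rcases Nat.eq_zero_or_pos l with h0 | h0
    · simpa [h0] using hR1
    · refine le_trans ?_ hR
      rw [pow_succ, mul_comm]
      have := Nat.pow_log_le_self p h0.ne'
      have : (p : ℝ) ^ Nat.log p l ≤ l := by exact_mod_cast this
      gcongr
  set c' := c.appr N with hc'
  have hc'lt : c' < p ^ N := c.appr_lt N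
  have hdiff : ‖(c : ℚ_[p]) - (c' : ℚ_[p])‖ ≤ (p : ℝ) ^ (-N : ℤ) := by
    have := (PadicInt.norm_le_pow_iff_mem_span_pow _ N).2 (c.appr_spec N)
    rw [PadicInt.norm_def] at this
    simpa using this
  have hpN : (0 : ℝ) < (p : ℝ) ^ N := by positivity
  have hlow : ∀ j ∈ Finset.Icc 1 l, (p : ℝ) ^ (-N : ℤ) ≤ ‖((c' + j : ℕ) : ℚ_[p])‖ := by
    intro j hj
    rw [Finset.mem_Icc] at hj
    by_contra hlt
    push Not at hlt
    have h2 : ‖(((c' + j : ℕ) : ℤ) : ℚ_[p])‖ ≤ (p : ℝ) ^ (-(N + 1 : ℕ) : ℤ) := by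
      rw [Padic.norm_le_pow_iff_norm_lt_pow_add_one]
      push_cast at hlt ⊢
      simpa using hlt
    rw [Padic.norm_int_le_pow_iff_dvd] at h2
    have h3 : p ^ (N + 1) ∣ c' + j := by exact_mod_cast h2
    have h4 := Nat.le_of_dvd (by omega) h3
    have h5 : p ^ N * 2 ≤ p ^ (N + 1) := by
      rw [pow_succ]; exact Nat.mul_le_mul_left _ hp.two_le
    omega
  have hfac : ∀ j ∈ Finset.Icc 1 l, GB ‖((c' + j : ℕ) : ℚ_[p])‖ R
      (C ((j : ℚ_[p]) + (c : ℚ_[p])) + C ε * X) := by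
    intro j hj α
    have hl := hlow j hj
    rcases α with _ | _ | α
    · simp only [coeff_add, coeff_C_zero, mul_coeff_zero, coeff_X_zero, mul_zero, add_zero,
        pow_zero, mul_one]
      rw [show (j : ℚ_[p]) + (c : ℚ_[p]) = ((c' + j : ℕ) : ℚ_[p]) + ((c : ℚ_[p]) - c') by
        push_cast; ring]
      exact (IsUltrametricDist.norm_add_le_max _ _).trans (max_le le_rfl (hdiff.trans hl))
    · have : (C ((j : ℚ_[p]) + (c : ℚ_[p])) + C ε * X).coeff (0 + 1) = ε := by
        simp [coeff_C]
      rw [this, zero_add, pow_one]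
      calc ‖ε‖ ≤ 1 := hε
        _ = (p : ℝ) ^ (-N : ℤ) * (p : ℝ) ^ N := by
          rw [zpow_neg, zpow_natCast, inv_mul_cancel₀ hpN.ne']
        _ ≤ _ := mul_le_mul hl hNR hpN.le (norm_nonneg _)
    · have : (C ((j : ℚ_[p]) + (c : ℚ_[p])) + C ε * X).coeff (α + 1 + 1) = 0 := by
        simp [coeff_C, coeff_X]
      rw [this, norm_zero]
      positivity
  refine (GB.prod hR0 _ _ _ hfac).mono hR0 ?_
  rw [← norm_prod, ← Nat.cast_prod]
  have e : ∏ j ∈ Finset.Icc 1 l, (c' + j) = l.factorial * (c' + l).choose l := by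
    rw [← Nat.ascFactorial_eq_factorial_mul_choose, Nat.ascFactorial_eq_prod_range,
      Finset.range_eq_Ico, ← Finset.Ico_add_one_right_eq_Icc,
      ← Finset.prod_Ico_add' _ 0 l 1]
    apply Finset.prod_congr rfl
    intro j _
    ring
  rw [e, Nat.cast_mul, norm_mul]
  have h1 : ‖(((c' + l).choose l : ℕ) : ℚ_[p])‖ ≤ 1 := by
    have := Padic.norm_int_le_one (p := p) ((c' + l).choose l : ℤ)
    simpa using this
  exact mul_le_of_le_one_right (norm_nonneg _) h1

lemma half_bound {p : ℕ} [Fact p.Prime] (l : ℕ) (R : ℝ) (hR1 : (p : ℝ) ≤ R)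
    (hR : (p : ℝ) * l ≤ R) (c : ℤ_[p]) (ε : ℚ_[p]) (hε : ‖ε‖ ≤ 1)
    (B : ℝ) (hB : 1 ≤ B) (d : ℚ_[p])
    (h : ∀ j ∈ Finset.Icc 1 l, (j : ℚ_[p]) + d ≠ 0 ∧ ‖(j : ℚ_[p]) + d‖⁻¹ ≤ B) :
    GB B R (∏ j ∈ Finset.Icc 1 l, (C (((j : ℚ_[p]) + d)⁻¹) *
      (C ((j : ℚ_[p]) + (c : ℚ_[p])) + C ε * X))) := by
  have hR0 : 0 ≤ R := le_trans (by positivity) hR1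
  rw [Finset.prod_mul_distrib, ← map_prod]
  exact ((GB.C hR0 _).mul hR0 (num_bound l R hR1 hR c ε hε)).mono hR0 (den_bound B hB l d h)

lemma Q_bound {p : ℕ} [Fact p.Prime] (R : ℝ) (hR : 1 ≤ R) (Q : Polynomial ℤ_[p]) (b : ℤ_[p]) :
    GB 1 R ((Q.map (PadicInt.Coe.ringHom)).comp (X + C (b : ℚ_[p]))) := by
  intro α
  have : (Q.map (PadicInt.Coe.ringHom)).comp (X + C (b : ℚ_[p])) =
      (Q.comp (X + C b)).map (PadicInt.Coe.ringHom) := by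
    rw [Polynomial.map_comp]
    rw [Polynomial.map_add, Polynomial.map_X, Polynomial.map_C]
    rfl
  rw [this, coeff_map, one_mul]
  exact (PadicInt.norm_le_one ((Q.comp (X + C b)).coeff α)).trans (one_le_pow₀ hR)

/-- **Claim 3 in the proof of Lemma 3.4.1.**
With `ξ', ξ_1, …, ξ_{n₀} ∈ ℤ_p` such that the differences `ξ_1 - ξ_k` and `ξ_k - ξ'`
are `p`-adically non-Liouville and each either `0` or not a rational integer, and
`Q ∈ ℤ_p[x]`, there is `A > 0` such that for every `δ > 1` there is `C > 0` with
`|c_α^{j',l}| ≤ C δ^{A|j'|}` for all `α ≤ m-1`, `l ∈ ℕ` and `j' ∈ ℤ` with `|j'| > l`,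
where `c_α^{j',l}` is the coefficient of `x^α` in the polynomial `claim3Poly`. -/
theorem stmt6 (p : ℕ) [Fact p.Prime] (m n₀ : ℕ) (hm : 1 ≤ m) (hn₀ : 0 < n₀)
    (ξ' : ℤ_[p]) (ξ : Fin n₀ → ℤ_[p])
    (hNL₁ : ∀ k, IsPAdicNonLiouville (ξ ⟨0, hn₀⟩ - ξ k))
    (hNL₂ : ∀ k, IsPAdicNonLiouville (ξ k - ξ'))
    (hNI₁ : ∀ k, ξ ⟨0, hn₀⟩ - ξ k = 0 ∨
      ∀ i : ℤ, ((ξ ⟨0, hn₀⟩ - ξ k : ℤ_[p]) : ℚ_[p]) ≠ (i : ℚ_[p]))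
    (hNI₂ : ∀ k, ξ k - ξ' = 0 ∨ ∀ i : ℤ, ((ξ k - ξ' : ℤ_[p]) : ℚ_[p]) ≠ (i : ℚ_[p]))
    (Q : Polynomial ℤ_[p]) :
    ∃ A : ℝ, 0 < A ∧ ∀ δ : ℝ, 1 < δ → ∃ C : ℝ, 0 < C ∧
      ∀ α : ℕ, α ≤ m - 1 → ∀ l : ℕ, ∀ j' : ℤ, (l : ℤ) < |j'| →
        ‖(claim3Poly p m n₀ hn₀ ξ' ξ Q j' l).coeff α‖ ≤ C * δ ^ (A * (j'.natAbs : ℝ)) := by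
  have hp : p.Prime := Fact.out
  have hp1 : (1 : ℝ) ≤ p := by exact_mod_cast hp.one_lt.le
  refine ⟨2 * m * n₀ + m, by positivity, ?_⟩
  intro δ hδ
  choose Ck hCk0 hCk using fun k => hNL₁ k δ hδ
  set C0 : ℝ := 1 + ∑ k, Ck k with hC0
  have hC0k : ∀ k, Ck k ≤ C0 := by
    intro k
    have := Finset.single_le_sum (f := Ck) (fun i _ => (hCk0 i).le) (Finset.mem_univ k)
    linarith
  have hC01 : 1 ≤ C0 := by
    have := Finset.sum_nonneg (s := Finset.univ) (f := Ck) (fun i _ => (hCk0 i).le)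
    linarith
  set K : ℝ := (δ - 1)⁻¹ with hK
  have hK0 : 0 < K := inv_pos.2 (by linarith)
  have hKn : ∀ n : ℕ, (n : ℝ) ≤ K * δ ^ n := by
    intro n
    have := one_add_mul_le_pow (a := δ - 1) (by linarith) n
    rw [add_sub_cancel] at this
    rw [hK, ← div_eq_inv_mul, le_div_iff₀ (by linarith)]
    linarith
  refine ⟨C0 ^ (2 * m * n₀) * (p * K) ^ m, by positivity, ?_⟩
  intro α hα l j' hl
  set n := j'.natAbs with hn
  have hln : l < n := by
    rw [Int.abs_eq_natAbs] at hl
    exact_mod_cast hl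
  have hn1 : (1 : ℝ) ≤ n := by exact_mod_cast (by omega : 1 ≤ n)
  have hlnR : (l : ℝ) ≤ n := by exact_mod_cast hln.le
  set R : ℝ := p * n with hRdef
  have hR1 : (p : ℝ) ≤ R := le_mul_of_one_le_right (by positivity) hn1
  have hRl : (p : ℝ) * l ≤ R := mul_le_mul_of_nonneg_left hlnR (by positivity)
  have hR0 : 0 ≤ R := by positivity
  have hR11 : 1 ≤ R := hp1.trans hR1
  set B : ℝ := C0 * δ ^ n with hBdef
  have hB : 1 ≤ B := one_le_mul_of_one_le_of_one_le hC01 (one_le_pow₀ hδ.le)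
  have hden : ∀ k, ∀ s : ℤ, s ≠ 0 → s.natAbs ≤ n →
      ((ξ ⟨0, hn₀⟩ - ξ k : ℤ_[p]) : ℚ_[p]) + s ≠ 0 ∧
      ‖((ξ ⟨0, hn₀⟩ - ξ k : ℤ_[p]) : ℚ_[p]) + s‖⁻¹ ≤ B := by
    intro k s hs hsn
    have hne : ((ξ ⟨0, hn₀⟩ - ξ k : ℤ_[p]) : ℚ_[p]) + s ≠ 0 := by
      rcases hNI₁ k with h | h
      · rw [h]; simpa using hs
      · intro h0
        apply h (-s)
        push_cast at h0 ⊢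
        linear_combination h0
    refine ⟨hne, (hCk k s hne).trans ?_⟩
    exact mul_le_mul (hC0k k) (pow_le_pow_right₀ hδ.le hsn) (by positivity) (by positivity)
  have hk : ∀ k ∈ (Finset.univ : Finset (Fin n₀)), GB ((B * B) ^ m) R
      (∏ j ∈ Finset.Icc 1 l,
      ((Polynomial.C (((j : ℚ_[p]) - ((ξ ⟨0, hn₀⟩ : ℚ_[p]) - (ξ k : ℚ_[p])))⁻¹) *
          (Polynomial.C ((j : ℚ_[p]) - (j' : ℚ_[p]) + (ξ k : ℚ_[p]) - (ξ' : ℚ_[p])) -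
            Polynomial.X)) *
        (Polynomial.C (((j : ℚ_[p]) + ((ξ ⟨0, hn₀⟩ : ℚ_[p]) - (ξ k : ℚ_[p])))⁻¹) *
          (Polynomial.C ((j : ℚ_[p]) + (j' : ℚ_[p]) - (ξ k : ℚ_[p]) + (ξ' : ℚ_[p])) +
            Polynomial.X))) ^ m) := by
    intro k _
    rw [Finset.prod_pow, Finset.prod_mul_distrib]
    apply GB.pow hR0
    apply GB.mul hR0
    · convert half_bound l R hR1 hRl (-(j' : ℤ_[p]) + ξ k - ξ') (-1) (by simp) B hB
        (-((ξ ⟨0, hn₀⟩ : ℚ_[p]) - (ξ k : ℚ_[p]))) ?_ using 1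
      · apply Finset.prod_congr rfl
        intro j _
        rw [← sub_eq_add_neg (j : ℚ_[p])]
        congr 1
        simp only [PadicInt.coe_sub, PadicInt.coe_add, PadicInt.coe_neg, PadicInt.coe_intCast,
          map_neg, map_one]
        rw [show (j : ℚ_[p]) + (-(j' : ℚ_[p]) + ξ k - ξ') = j - j' + ξ k - ξ' by ring]
        ring
      · intro j hj
        rw [Finset.mem_Icc] at hj
        obtain ⟨h1, h2⟩ := hden k (-(j : ℤ)) (by omega) (by omega)
        have e : (j : ℚ_[p]) + -((ξ ⟨0, hn₀⟩ : ℚ_[p]) - (ξ k : ℚ_[p])) =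
            -(((ξ ⟨0, hn₀⟩ - ξ k : ℤ_[p]) : ℚ_[p]) + ((-(j : ℤ) : ℤ) : ℚ_[p])) := by
          push_cast; ring
        rw [e, norm_neg]
        exact ⟨neg_ne_zero.2 h1, h2⟩
    · convert half_bound l R hR1 hRl ((j' : ℤ_[p]) - ξ k + ξ') 1 (by simp) B hB
        ((ξ ⟨0, hn₀⟩ : ℚ_[p]) - (ξ k : ℚ_[p])) ?_ using 1
      · apply Finset.prod_congr rfl
        intro j _
        congr 1
        simp only [PadicInt.coe_sub, PadicInt.coe_add, PadicInt.coe_intCast, map_one, one_mul]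
        rw [show (j : ℚ_[p]) + ((j' : ℚ_[p]) - ξ k + ξ') = j + j' - ξ k + ξ' by ring]
      · intro j hj
        rw [Finset.mem_Icc] at hj
        obtain ⟨h1, h2⟩ := hden k (j : ℤ) (by omega) (by omega)
        have e : (j : ℚ_[p]) + ((ξ ⟨0, hn₀⟩ : ℚ_[p]) - (ξ k : ℚ_[p])) =
            (((ξ ⟨0, hn₀⟩ - ξ k : ℤ_[p]) : ℚ_[p]) + ((j : ℤ) : ℚ_[p])) := by
          push_cast; ring
        rw [e]
        exact ⟨h1, h2⟩
  have hQ := Q_bound R hR11 Q (ξ' + (j' : ℤ_[p]))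
  have hall := (hQ.mul hR0 (GB.prod hR0 _ _ _ hk)) α
  have ecast : (((ξ' + (j' : ℤ_[p]) : ℤ_[p])) : ℚ_[p]) = (ξ' : ℚ_[p]) + (j' : ℚ_[p]) := by
    push_cast; rfl
  rw [ecast] at hall
  refine (show ‖(claim3Poly p m n₀ hn₀ ξ' ξ Q j' l).coeff α‖ ≤ _ from hall).trans ?_
  simp only [Finset.prod_const, Finset.card_univ, Fintype.card_fin, one_mul]
  have hRα : R ^ α ≤ (p * K * δ ^ n) ^ m := by
    calc R ^ α ≤ R ^ m := pow_le_pow_right₀ hR11 (by omega)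
      _ ≤ _ := by
        apply pow_le_pow_left₀ hR0
        rw [mul_assoc]
        exact mul_le_mul_of_nonneg_left (hKn n) (by positivity)
  have efin : δ ^ ((2 * m * n₀ + m : ℝ) * (n : ℝ)) = (δ ^ n) ^ (2 * m * n₀ + m) := by
    rw [← pow_mul, ← Real.rpow_natCast]
    congr 1
    push_cast; ring
  rw [efin]
  calc ((B * B) ^ m) ^ n₀ * R ^ α ≤ ((B * B) ^ m) ^ n₀ * (p * K * δ ^ n) ^ m :=
        mul_le_mul_of_nonneg_left hRα (by positivity)
    _ = _ := by
      have : ((B * B) ^ m) ^ n₀ = B ^ (2 * m * n₀) := by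
        rw [← pow_two, ← pow_mul, ← pow_mul, mul_assoc]
      rw [this, hBdef, mul_pow, mul_pow, pow_add]
      ring
end

section
/- Let p be a prime and let σ ∈ ℤ_p be p-adically non-Liouville, with σ either 0 or not a rational integer (so j + σ ≠ 0 for every integer j ≥ 1). Then for every real δ > 1 there exists C > 0 such that |l!|_p · |∏_{j=1}^l (j + σ)|_p^{−1} ≤ C·δ^l for all l ∈ ℕ; equivalently, |∏_{j=1}^l j/(j+σ)|_p ≤ C·δ^l. -/
theorem stmt7_aux0 (F A B M : ℝ) (hA : 0 < A) (hB : 0 < B) (hM : 0 < M) (h : F ≤ A * B) :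
    F * (A * M * B)⁻¹ ≤ M⁻¹ := by
  calc _ ≤ (A * B) * (A * M * B)⁻¹ := by gcongr
    _ = M⁻¹ := by field_simp

theorem stmt7_aux (p : ℕ) [Fact p.Prime] (x : ℚ_[p]) (a b : ℕ)
    (hne : ∀ j : ℕ, 1 ≤ j → (j : ℚ_[p]) + x ≠ 0)
    (hmin : ∀ i ∈ Finset.range (a + 1 + b),
      ‖((a + 1 : ℕ) : ℚ_[p]) + x‖ ≤ ‖((i + 1 : ℕ) : ℚ_[p]) + x‖) :
    ‖((a + 1 + b).factorial : ℚ_[p])‖ *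
      ‖∏ i ∈ Finset.range (a + 1 + b), (((i + 1 : ℕ) : ℚ_[p]) + x)‖⁻¹
      ≤ ‖((a + 1 : ℕ) : ℚ_[p]) + x‖⁻¹ := by
  have key : ∀ i ∈ Finset.range (a + 1 + b),
      ‖((i + 1 : ℕ) : ℚ_[p]) - ((a + 1 : ℕ) : ℚ_[p])‖ ≤ ‖((i + 1 : ℕ) : ℚ_[p]) + x‖ := by
    intro i hi
    have h := Padic.nonarchimedean
      (((i + 1 : ℕ) : ℚ_[p]) + x) (-(((a + 1 : ℕ) : ℚ_[p]) + x))
    rw [norm_neg, ← sub_eq_add_neg, max_eq_left (hmin i hi)] at h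
    simpa using h
  have h1 : ‖(a.factorial : ℚ_[p])‖ ≤ ∏ i ∈ Finset.range a, ‖((i + 1 : ℕ) : ℚ_[p]) + x‖ := by
    rw [← Finset.prod_range_reflect, ← Finset.prod_range_add_one_eq_factorial, Nat.cast_prod,
      norm_prod]
    refine Finset.prod_le_prod (fun _ _ => norm_nonneg _) ?_
    intro i hi
    have hi' := Finset.mem_range.1 hi
    refine le_trans (le_of_eq ?_) (key (a - 1 - i) (Finset.mem_range.2 (by omega)))
    obtain ⟨c, rfl⟩ : ∃ c, a = c + 1 + i := ⟨a - 1 - i, by omega⟩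
    have : c + 1 + i - 1 - i = c := by omega
    rw [this, norm_sub_rev]
    congr 1
    push_cast
    ring
  have h2 : ‖(b.factorial : ℚ_[p])‖ ≤
      ∏ i ∈ Finset.range b, ‖((a + 1 + i + 1 : ℕ) : ℚ_[p]) + x‖ := by
    rw [← Finset.prod_range_add_one_eq_factorial, Nat.cast_prod, norm_prod]
    refine Finset.prod_le_prod (fun _ _ => norm_nonneg _) ?_
    intro i hi
    have hi' := Finset.mem_range.1 hi
    refine le_trans (le_of_eq ?_) (key (a + 1 + i) (Finset.mem_range.2 (by omega)))
    congr 1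
    push_cast
    ring
  have h3 : ‖((a + 1 + b).factorial : ℚ_[p])‖ ≤
      ‖(a.factorial : ℚ_[p])‖ * ‖(b.factorial : ℚ_[p])‖ := by
    have hd : a.factorial * b.factorial ∣ (a + 1 + b).factorial :=
      (Nat.factorial_mul_factorial_dvd_factorial_add a b).trans
        (Nat.factorial_dvd_factorial (by omega))
    obtain ⟨c, hc⟩ := hd
    rw [hc, Nat.cast_mul, Nat.cast_mul, norm_mul, norm_mul]
    have hc1 : ‖(c : ℚ_[p])‖ ≤ 1 := by
      simpa using Padic.norm_int_le_one (p := p) (c : ℤ)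
    exact mul_le_of_le_one_right (by positivity) hc1
  rw [norm_prod, Finset.prod_range_add, Finset.prod_range_succ]
  have hpos : ∀ j : ℕ, 0 < ‖((j + 1 : ℕ) : ℚ_[p]) + x‖ := fun j =>
    norm_pos_iff.2 (hne _ (by omega))
  have hA : 0 < ∏ i ∈ Finset.range a, ‖((i + 1 : ℕ) : ℚ_[p]) + x‖ :=
    Finset.prod_pos fun i _ => hpos i
  have hB : 0 < ∏ i ∈ Finset.range b, ‖((a + 1 + i + 1 : ℕ) : ℚ_[p]) + x‖ :=
    Finset.prod_pos fun i _ => hpos (a + 1 + i)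
  have hM := hpos a
  have h4 := h3.trans (mul_le_mul h1 h2 (norm_nonneg _) hA.le)
  exact stmt7_aux0 _ _ _ _ hA hB hM h4

/-- **Estimate from claim 4 in the proof of Lemma 3.4.1.**
If `σ ∈ ℤ_p` is `p`-adically non-Liouville and either `0` or not a rational integer,
then for every `δ > 1` there is `C > 0` such that
`|l!|_p · |∏_{j=1}^l (j + σ)|_p⁻¹ ≤ C δ^l` for all `l ∈ ℕ`. -/
theorem stmt7 (p : ℕ) [Fact p.Prime] (σ : ℤ_[p])
    (hσNL : IsPAdicNonLiouville σ)
    (hσ : σ = 0 ∨ ∀ i : ℤ, (σ : ℚ_[p]) ≠ (i : ℚ_[p])) :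
    ∀ δ : ℝ, 1 < δ → ∃ C : ℝ, 0 < C ∧
      ∀ l : ℕ, ‖(l.factorial : ℚ_[p])‖ *
        ‖∏ j ∈ Finset.Icc 1 l, ((j : ℚ_[p]) + (σ : ℚ_[p]))‖⁻¹ ≤ C * δ ^ l := by
  intro δ hδ
  obtain ⟨C, hC, hb⟩ := hσNL δ hδ
  have hne : ∀ j : ℕ, 1 ≤ j → (j : ℚ_[p]) + (σ : ℚ_[p]) ≠ 0 := by
    intro j hj h
    rcases hσ with rfl | h'
    · simp at h
      omega
    · apply h' (-(j : ℤ))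
      push_cast
      linear_combination h
  refine ⟨max C 1, by positivity, ?_⟩
  intro l
  have hprod : ∏ j ∈ Finset.Icc 1 l, ((j : ℚ_[p]) + (σ : ℚ_[p])) =
      ∏ i ∈ Finset.range l, (((i + 1 : ℕ) : ℚ_[p]) + (σ : ℚ_[p])) := by
    rw [Finset.range_eq_Ico, Finset.prod_Ico_add' (fun j : ℕ => (j : ℚ_[p]) + (σ : ℚ_[p])) 0 l 1]
    rfl
  rw [hprod]
  rcases Nat.eq_zero_or_pos l with rfl | hl
  · simp
  obtain ⟨a, ha, hmin⟩ := Finset.exists_min_image (Finset.range l)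
    (fun i => ‖((i + 1 : ℕ) : ℚ_[p]) + (σ : ℚ_[p])‖) ⟨0, Finset.mem_range.2 hl⟩
  obtain ⟨b, rfl⟩ : ∃ b, l = a + 1 + b := ⟨l - (a + 1), by have := Finset.mem_range.1 ha; omega⟩
  refine (stmt7_aux p σ a b hne hmin).trans ?_
  have h := hb ((a + 1 : ℕ) : ℤ) (by
    rw [add_comm]; exact_mod_cast hne (a + 1) (by omega))
  rw [add_comm, Int.cast_natCast, Int.natAbs_natCast] at h
  refine h.trans ?_
  exact mul_le_mul (le_max_left _ _) (pow_le_pow_right₀ hδ.le (by omega)) (by positivity)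
    (by positivity)
end

section
/- Let p be a prime and let σ ∈ ℤ_p be p-adically non-Liouville, with σ either 0 or not a rational integer (so j + σ ≠ 0 for every integer j ≥ 1). Then for every real ζ > p^{1/(p−1)} there exists C > 0 such that |∏_{j=1}^l (j + σ)|_p^{−1} ≤ C·ζ^l for all l ∈ ℕ. -/
theorem fact_bd (p : ℕ) [hp : Fact p.Prime] (n : ℕ) :
    ‖((n.factorial : ℕ) : ℚ_[p])‖⁻¹ ≤ ((p : ℝ) ^ ((1 : ℝ) / ((p : ℝ) - 1))) ^ n := by
  have hp1 : (1:ℝ) < p := by exact_mod_cast hp.out.one_lt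
  have h0 : ((n.factorial : ℕ) : ℚ_[p]) ≠ 0 := by exact_mod_cast n.factorial_ne_zero
  rw [Padic.norm_eq_zpow_neg_valuation h0, Padic.valuation_natCast, zpow_neg, inv_inv,
    zpow_natCast, ← Real.rpow_natCast, ← Real.rpow_natCast, ← Real.rpow_mul (by positivity)]
  apply Real.rpow_le_rpow_of_exponent_le hp1.le
  have h := sub_one_mul_padicValNat_factorial (p := p) n
  have h2 : (p - 1) * padicValNat p n.factorial ≤ n := by rw [h]; exact Nat.sub_le _ _
  have h3 : ((p:ℝ) - 1) * padicValNat p n.factorial ≤ n := by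
    have := (Nat.cast_le (α := ℝ)).2 h2
    rwa [Nat.cast_mul, Nat.cast_sub hp.out.one_lt.le, Nat.cast_one] at this
  rw [one_div, inv_mul_eq_div, le_div_iff₀ (by linarith)]
  linarith

/-- **Radius of convergence estimate used in Lemma 3.4.1 and Proposition 3.5.3.**
If `σ ∈ ℤ_p` is `p`-adically non-Liouville and either `0` or not a rational integer,
then for every real `ζ > p^{1/(p-1)}` there is `C > 0` such that
`|∏_{j=1}^l (j + σ)|_p⁻¹ ≤ C ζ^l` for all `l ∈ ℕ`. -/
theorem stmt8 (p : ℕ) [Fact p.Prime] (σ : ℤ_[p])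
    (hσNL : IsPAdicNonLiouville σ)
    (hσ : σ = 0 ∨ ∀ i : ℤ, (σ : ℚ_[p]) ≠ (i : ℚ_[p])) :
    ∀ ζ : ℝ, (p : ℝ) ^ ((1 : ℝ) / ((p : ℝ) - 1)) < ζ → ∃ C : ℝ, 0 < C ∧
      ∀ l : ℕ, ‖∏ j ∈ Finset.Icc 1 l, ((j : ℚ_[p]) + (σ : ℚ_[p]))‖⁻¹ ≤ C * ζ ^ l := by
  intro ζ hζ
  have hp : p.Prime := Fact.out
  have hp1 : (1:ℝ) < p := by exact_mod_cast hp.one_lt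
  set r : ℝ := (p : ℝ) ^ ((1 : ℝ) / ((p : ℝ) - 1)) with hr
  have hr1 : 1 ≤ r := Real.one_le_rpow hp1.le (by
    have : (0:ℝ) < (p:ℝ) - 1 := by linarith
    positivity)
  have hr0 : 0 < r := by linarith
  have hne : ∀ j : ℕ, 1 ≤ j → (σ : ℚ_[p]) + ((j : ℤ) : ℚ_[p]) ≠ 0 := by
    intro j hj h
    rcases hσ with h0 | h1
    · subst h0
      simp at h
      omega
    · apply h1 (-(j:ℤ))
      rw [Int.cast_neg]
      exact eq_neg_of_add_eq_zero_left h
  obtain ⟨C, hC, hb⟩ := hσNL (ζ / r) ((one_lt_div hr0).2 hζ)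
  have hδ : 1 ≤ ζ / r := ((one_lt_div hr0).2 hζ).le
  refine ⟨max C 1, by positivity, fun l => ?_⟩
  rcases Nat.eq_zero_or_pos l with rfl | hl
  · simp
  obtain ⟨m, hm, hmin⟩ := Finset.exists_min_image (Finset.Icc 1 l)
    (fun j : ℕ => ‖(j : ℚ_[p]) + (σ : ℚ_[p])‖) ⟨1, by simp; omega⟩
  rw [Finset.mem_Icc] at hm
  obtain ⟨a, rfl⟩ : ∃ a, m = a + 1 := ⟨m - 1, by omega⟩
  obtain ⟨b, rfl⟩ : ∃ b, l = a + 1 + b := ⟨l - (a + 1), by omega⟩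
  have key : ∀ j : ℕ, 1 ≤ j → j ≤ a + 1 + b → j ≠ a + 1 →
      ‖(j : ℚ_[p]) + (σ : ℚ_[p])‖⁻¹ ≤ ‖(j : ℚ_[p]) - ((a + 1 : ℕ) : ℚ_[p])‖⁻¹ := by
    intro j h1 h2 h3
    apply inv_anti₀
    · rw [norm_pos_iff, sub_ne_zero]
      exact_mod_cast h3
    · have e : (j : ℚ_[p]) - ((a + 1 : ℕ) : ℚ_[p])
          = ((j : ℚ_[p]) + σ) - (((a + 1 : ℕ) : ℚ_[p]) + σ) := by ring
      rw [e]
      have hm' := hmin j (Finset.mem_Icc.2 ⟨h1, h2⟩)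
      rw [sub_eq_add_neg]
      refine (IsUltrametricDist.norm_add_le_max _ _).trans ?_
      rw [norm_neg]
      exact max_le le_rfl hm'
  have hprod : ∏ j ∈ Finset.Icc 1 (a + 1 + b), ((j : ℚ_[p]) + (σ : ℚ_[p])) =
      ∏ i ∈ Finset.range (a + 1 + b), (((i + 1 : ℕ) : ℚ_[p]) + (σ : ℚ_[p])) := by
    rw [Finset.range_eq_Ico, Finset.prod_Ico_add' (fun j : ℕ => (j : ℚ_[p]) + (σ : ℚ_[p])) 0 _ 1]
    rfl
  rw [hprod, Finset.prod_range_add, Finset.prod_range_succ, norm_mul, norm_mul, mul_inv, mul_inv]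
  have hA : ‖∏ i ∈ Finset.range a, (((i + 1 : ℕ) : ℚ_[p]) + (σ : ℚ_[p]))‖⁻¹ ≤ r ^ a := by
    refine le_trans ?_ (fact_bd p a)
    rw [← Finset.prod_range_add_one_eq_factorial, ← Finset.prod_range_reflect, Nat.cast_prod,
      norm_prod, norm_prod, ← Finset.prod_inv_distrib, ← Finset.prod_inv_distrib]
    apply Finset.prod_le_prod
    · intros; positivity
    · intro i hi
      rw [Finset.mem_range] at hi
      have h := key (a - 1 - i + 1) (by omega) (by omega) (by omega)
      have e : a + 1 - (a - 1 - i + 1) = i + 1 := by omega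
      rw [norm_sub_rev, ← Nat.cast_sub (by omega), e] at h
      exact h
  have hB : ‖∏ i ∈ Finset.range b, (((a + 1 + i + 1 : ℕ) : ℚ_[p]) + (σ : ℚ_[p]))‖⁻¹ ≤ r ^ b := by
    refine le_trans ?_ (fact_bd p b)
    rw [← Finset.prod_range_add_one_eq_factorial, Nat.cast_prod,
      norm_prod, norm_prod, ← Finset.prod_inv_distrib, ← Finset.prod_inv_distrib]
    apply Finset.prod_le_prod
    · intros; positivity
    · intro i hi
      rw [Finset.mem_range] at hi
      have h := key (a + 1 + i + 1) (by omega) (by omega) (by omega)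
      have e : a + 1 + i + 1 - (a + 1) = i + 1 := by omega
      rw [← Nat.cast_sub (by omega), e] at h
      exact h
  have hM : ‖((a + 1 : ℕ) : ℚ_[p]) + (σ : ℚ_[p])‖⁻¹ ≤ max C 1 * (ζ / r) ^ (a + 1 + b) := by
    have h := hb ((a + 1 : ℕ) : ℤ) (hne (a + 1) (by omega))
    rw [Int.natAbs_natCast, Int.cast_natCast, add_comm (σ : ℚ_[p])] at h
    refine h.trans ?_
    have := pow_le_pow_right₀ hδ (show a + 1 ≤ a + 1 + b by omega)
    exact mul_le_mul (le_max_left _ _) this (by positivity) (by positivity)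
  have hζ0 : 0 < ζ := hr0.trans hζ
  calc _ ≤ r ^ a * (max C 1 * (ζ / r) ^ (a + 1 + b)) * r ^ b := by
        gcongr
    _ = max C 1 * ((ζ / r) ^ (a + 1 + b) * r ^ (a + b)) := by ring
    _ ≤ max C 1 * ((ζ / r) ^ (a + 1 + b) * r ^ (a + 1 + b)) := by
        have := pow_le_pow_right₀ hr1 (show a + b ≤ a + 1 + b by omega)
        gcongr
    _ = max C 1 * ζ ^ (a + 1 + b) := by
        rw [← mul_pow, div_mul_cancel₀ _ hr0.ne']
end

section
/- Let p be a prime and let V be a normed ℚ_p-vector space. Let α ∈ ℤ_p be p-adically non-Liouville with α + i ≠ 0 for every integer i. Let 0 < b < c be real numbers and let (a_i)_{i∈ℤ} be a family of elements of V such that for every r ∈ (b,c) one has ‖a_i‖·r^i → 0 as |i| → ∞. Then for every r ∈ (b,c) one also has ‖a_i‖·|i + α|_p^{−1}·r^i → 0 as |i| → ∞; consequently, the family ((i+α)^{−1}·a_i)_{i∈ℤ} satisfies the same convergence condition as (a_i)_{i∈ℤ}, and the map (a_i)_i ↦ ((i+α)·a_i)_i is a bijection of the space of families satisfying this condition. 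-/
open Filter

/-- A family `(a_i)_{i ∈ ℤ}` in a normed space decays on the open annulus of radii
`(b, c)`: for every `r ∈ (b, c)`, `‖a_i‖ r^i → 0` as `|i| → ∞`. -/
def AnnulusDecay {V : Type*} [NormedAddCommGroup V] (b c : ℝ) (a : ℤ → V) : Prop :=
  ∀ r : ℝ, b < r → r < c →
    Filter.Tendsto (fun i : ℤ => ‖a i‖ * r ^ i) Filter.cofinite (nhds 0)

theorem annulus_aux (p : ℕ) [Fact p.Prime] (V : Type*) [NormedAddCommGroup V]
    (α : ℤ_[p]) (hNL : IsPAdicNonLiouville α)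
    (hne : ∀ i : ℤ, ((i : ℚ_[p]) + (α : ℚ_[p])) ≠ 0)
    (b c : ℝ) (hb : 0 < b)
    (a : ℤ → V) (ha : AnnulusDecay b c a) (r : ℝ) (hbr : b < r) (hrc : r < c) :
    Filter.Tendsto (fun i : ℤ => ‖a i‖ * ‖(i : ℚ_[p]) + (α : ℚ_[p])‖⁻¹ * r ^ i)
        Filter.cofinite (nhds 0) := by
  have hr : 0 < r := hb.trans hbr
  obtain ⟨δ, h1, h2⟩ := exists_between
    (lt_min ((one_lt_div hr).2 hrc) ((one_lt_div hb).2 hbr))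
  have hd : 0 < δ := one_pos.trans h1
  have h3 : r * δ < c := by
    have := (lt_div_iff₀ hr).1 (h2.trans_le (min_le_left _ _))
    linarith
  have h4 : b < r / δ := by
    have := (lt_div_iff₀ hb).1 (h2.trans_le (min_le_right _ _))
    rw [lt_div_iff₀ hd]; linarith
  have h5 : r < r * δ := lt_mul_of_one_lt_right hr h1
  have h6 : r / δ < r := div_lt_self hr h1
  obtain ⟨C, hC, hb'⟩ := hNL δ h1
  have T := ((ha (r * δ) (hbr.trans h5) h3).add (ha (r / δ) h4 (h6.trans hrc))).const_mul C
  rw [add_zero, mul_zero] at T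
  refine squeeze_zero (fun i => by positivity) (fun i => ?_) T
  have h7 : ‖(i : ℚ_[p]) + (α : ℚ_[p])‖⁻¹ ≤ C * δ ^ i.natAbs := by
    rw [add_comm]
    exact hb' i (by rw [add_comm]; exact hne i)
  have h8 : δ ^ i.natAbs ≤ δ ^ i + (δ ^ i)⁻¹ := by
    rw [← zpow_natCast]
    rcases Int.natAbs_eq i with h | h
    · rw [← h]
      have : 0 < (δ ^ i)⁻¹ := by positivity
      linarith
    · have h' : (i.natAbs : ℤ) = -i := by omega
      rw [h', zpow_neg]
      have : 0 < δ ^ i := by positivity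
      linarith
  calc ‖a i‖ * ‖(i : ℚ_[p]) + (α : ℚ_[p])‖⁻¹ * r ^ i
      ≤ ‖a i‖ * (C * (δ ^ i + (δ ^ i)⁻¹)) * r ^ i := by
        gcongr
        exact h7.trans (by gcongr)
    _ = C * (‖a i‖ * (r * δ) ^ i + ‖a i‖ * (r / δ) ^ i) := by
        rw [mul_zpow, div_zpow]; ring

theorem annulus_aux2 (p : ℕ) [Fact p.Prime] (V : Type*) [NormedAddCommGroup V]
    [NormedSpace ℚ_[p] V]
    (α : ℤ_[p]) (hNL : IsPAdicNonLiouville α)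
    (hne : ∀ i : ℤ, ((i : ℚ_[p]) + (α : ℚ_[p])) ≠ 0)
    (b c : ℝ) (hb : 0 < b)
    (a : ℤ → V) (ha : AnnulusDecay b c a) :
    AnnulusDecay b c (fun i : ℤ => ((i : ℚ_[p]) + (α : ℚ_[p]))⁻¹ • a i) := by
  intro r h1 h2
  refine (annulus_aux p V α hNL hne b c hb a ha r h1 h2).congr (fun i => ?_)
  rw [norm_smul, norm_inv, mul_comm ‖a i‖]

/-- **Key convergence claim in the proof of Proposition 3.3.2.**
Let `α ∈ ℤ_p` be `p`-adically non-Liouville with `i + α ≠ 0` for every integer `i`, and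
let `(a_i)_{i∈ℤ}` be a family in a normed `ℚ_p`-vector space `V` with `‖a_i‖ r^i → 0`
(as `|i| → ∞`) for every `r ∈ (b, c)`, where `0 < b < c`.  Then
`‖a_i‖ ‖i + α‖⁻¹ r^i → 0` for every `r ∈ (b, c)`; consequently the family
`((i+α)⁻¹ a_i)_i` satisfies the same decay condition, and
`(f_i)_i ↦ ((i+α) f_i)_i` is a bijection of the space of such families. -/
theorem stmt9 (p : ℕ) [Fact p.Prime] (V : Type*) [NormedAddCommGroup V]
    [NormedSpace ℚ_[p] V]
    (α : ℤ_[p]) (hNL : IsPAdicNonLiouville α)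
    (hne : ∀ i : ℤ, ((i : ℚ_[p]) + (α : ℚ_[p])) ≠ 0)
    (b c : ℝ) (hb : 0 < b) (hbc : b < c)
    (a : ℤ → V) (ha : AnnulusDecay b c a) :
    (∀ r : ℝ, b < r → r < c →
      Filter.Tendsto (fun i : ℤ => ‖a i‖ * ‖(i : ℚ_[p]) + (α : ℚ_[p])‖⁻¹ * r ^ i)
        Filter.cofinite (nhds 0)) ∧
    AnnulusDecay b c (fun i : ℤ => ((i : ℚ_[p]) + (α : ℚ_[p]))⁻¹ • a i) ∧
    (∀ g : ℤ → V, AnnulusDecay b c g →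
      ∃! f : ℤ → V, AnnulusDecay b c f ∧
        ∀ i : ℤ, ((i : ℚ_[p]) + (α : ℚ_[p])) • f i = g i) := by
  refine ⟨fun r h1 h2 => annulus_aux p V α hNL hne b c hb a ha r h1 h2,
    annulus_aux2 p V α hNL hne b c hb a ha, fun g hg =>
    ⟨_, ⟨annulus_aux2 p V α hNL hne b c hb g hg, fun i => smul_inv_smul₀ (hne i) _⟩, ?_⟩⟩
  rintro f ⟨-, hf⟩
  funext i
  simp only [← hf i]
  rw [inv_smul_smul₀ (hne i)]
end

section
/- Let p be a prime and let V be a ℚ_p-vector space equipped with a nonarchimedean norm ‖·‖ (so ‖x + y‖ ≤ max(‖x‖,‖y‖)). Let σ_1, …, σ_N ∈ ℤ_p be p-adically non-Liouville, each either 0 or not a rational integer, let m ≥ 1 be an integer and C > 1 a real number. Suppose (v_l)_{l≥0} is a sequence in V satisfying, for every l ≥ 1, ‖v_l − v_{l−1}‖ ≤ C · ( ∏_{k=1}^N |l − σ_k|_p^{−1} · |l + σ_k|_p^{−1} )^m · ‖v_{l−1}‖. Then there exists ρ > 0 such that ρ^l·‖v_l − v_{l−1}‖ → 0 as l → ∞.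 -/
open Filter

def ExpBd (f : ℕ → ℝ) : Prop :=
  (∀ n, 0 ≤ f n) ∧ ∃ K B : ℝ, 0 < K ∧ 0 < B ∧ ∀ n, ∏ i ∈ Finset.range n, f i ≤ K * B ^ n

lemma ExpBd.mul {f g : ℕ → ℝ} (hf : ExpBd f) (hg : ExpBd g) : ExpBd (fun n => f n * g n) := by
  obtain ⟨f0, K, B, hK, hB, h⟩ := hf
  obtain ⟨g0, K', B', hK', hB', h'⟩ := hg
  refine ⟨fun n => mul_nonneg (f0 n) (g0 n), K * K', B * B', by positivity, by positivity, ?_⟩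
  intro n
  rw [Finset.prod_mul_distrib, mul_pow]
  calc _ ≤ (K * B ^ n) * (K' * B' ^ n) :=
        mul_le_mul (h n) (h' n) (Finset.prod_nonneg fun i _ => g0 i) (by positivity)
    _ = _ := by ring

lemma ExpBd.const {c : ℝ} (hc : 0 < c) : ExpBd (fun _ => c) :=
  ⟨fun _ => hc.le, 1, c, one_pos, hc, fun n => by simp⟩

lemma ExpBd.pow {f : ℕ → ℝ} (hf : ExpBd f) (m : ℕ) : ExpBd (fun n => f n ^ m) := by
  induction m with
  | zero => simpa using ExpBd.const one_pos
  | succ m ih => simpa only [pow_succ] using ih.mul hf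

lemma ExpBd.prod {ι : Type*} (s : Finset ι) {f : ι → ℕ → ℝ} (hf : ∀ k, ExpBd (f k)) :
    ExpBd (fun n => ∏ k ∈ s, f k n) := by
  classical
  induction s using Finset.induction_on with
  | empty => simpa using ExpBd.const one_pos
  | insert a s ha ih =>
    simp only [Finset.prod_insert ha]
    exact (hf a).mul ih

lemma norm_fact_inv_le (p : ℕ) [hp : Fact p.Prime] (n : ℕ) :
    ‖((n.factorial : ℕ) : ℚ_[p])‖⁻¹ ≤ (p : ℝ) ^ n := by
  have h0 : ((n.factorial : ℕ) : ℚ_[p]) ≠ 0 := by exact_mod_cast n.factorial_ne_zero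
  have hp1 : (1 : ℝ) ≤ p := by exact_mod_cast hp.out.one_lt.le
  rw [Padic.norm_eq_zpow_neg_valuation h0, Padic.valuation_natCast, zpow_neg, inv_inv,
    zpow_natCast]
  apply pow_le_pow_right₀ hp1
  have h := sub_one_mul_padicValNat_factorial (p := p) n
  have h2 := hp.out.two_le
  have : 1 * padicValNat p n.factorial ≤ (p - 1) * padicValNat p n.factorial :=
    Nat.mul_le_mul_right _ (by omega)
  omega

lemma prod_inv_le (p : ℕ) [hp : Fact p.Prime] (n : ℕ) (f : ℕ → ℝ)
    (hf : ∀ i < n, ‖((i + 1 : ℕ) : ℚ_[p])‖ ≤ f i) :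
    ∏ i ∈ Finset.range n, (f i)⁻¹ ≤ (p : ℝ) ^ n := by
  refine le_trans ?_ (norm_fact_inv_le p n)
  rw [← Finset.prod_range_add_one_eq_factorial, Nat.cast_prod, norm_prod, ← Finset.prod_inv_distrib]
  have pos : ∀ i : ℕ, 0 < ‖((i + 1 : ℕ) : ℚ_[p])‖ := fun i => by
    rw [norm_pos_iff]; exact_mod_cast i.succ_ne_zero
  apply Finset.prod_le_prod
  · intro i hi
    exact inv_nonneg.2 ((pos i).le.trans (hf i (Finset.mem_range.1 hi)))
  · intro i hi
    exact inv_anti₀ (pos i) (hf i (Finset.mem_range.1 hi))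

lemma key (p : ℕ) [hp : Fact p.Prime] (a : ℚ_[p]) (C : ℝ) (hC : 0 < C)
    (h : ∀ s : ℕ, ‖a + ((s + 1 : ℕ) : ℚ_[p])‖⁻¹ ≤ C * 2 ^ (s + 1)) :
    ExpBd (fun n => ‖a + ((n + 1 : ℕ) : ℚ_[p])‖⁻¹) := by
  have hp1 : (1 : ℝ) ≤ p := by exact_mod_cast hp.out.one_lt.le
  refine ⟨fun n => by positivity, C + 1, 2 * p, by positivity, by positivity, ?_⟩
  intro n
  rcases Nat.eq_zero_or_pos n with rfl | hn
  · simp [hC.le]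
  set f : ℕ → ℝ := fun n => ‖a + ((n + 1 : ℕ) : ℚ_[p])‖ with hf
  obtain ⟨i₀, hi₀, hmin⟩ := Finset.exists_min_image (Finset.range n) f ⟨0, by simpa using hn⟩
  have hi₀n := Finset.mem_range.1 hi₀
  have hd : ∀ i < n, ‖((i : ℚ_[p]) - (i₀ : ℚ_[p]))‖ ≤ f i := by
    intro i hi
    have e : ((i : ℚ_[p]) - (i₀ : ℚ_[p])) =
        (a + ((i + 1 : ℕ) : ℚ_[p])) - (a + ((i₀ + 1 : ℕ) : ℚ_[p])) := by push_cast; ring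
    rw [e]
    rw [sub_eq_add_neg]
    refine (IsUltrametricDist.norm_add_le_max _ _).trans ?_
    rw [norm_neg]
    exact max_le le_rfl (hmin i (Finset.mem_range.2 hi))
  obtain ⟨r, rfl⟩ : ∃ r, n = i₀ + 1 + r := ⟨n - (i₀ + 1), by omega⟩
  have h1 : ∏ i ∈ Finset.range i₀, (f i)⁻¹ ≤ (p : ℝ) ^ i₀ := by
    rw [← Finset.prod_range_reflect]
    apply prod_inv_le p i₀ (fun j => f (i₀ - 1 - j))
    intro i hi
    refine le_trans (le_of_eq ?_) (hd (i₀ - 1 - i) (by omega))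
    rw [norm_sub_rev]
    congr 1
    obtain ⟨t, rfl⟩ : ∃ t, i₀ = t + (i + 1) := ⟨i₀ - (i + 1), by omega⟩
    have : t + (i + 1) - 1 - i = t := by omega
    rw [this]; push_cast; ring
  have h2 : ∏ j ∈ Finset.range r, (f (i₀ + 1 + j))⁻¹ ≤ (p : ℝ) ^ r := by
    apply prod_inv_le p r (fun j => f (i₀ + 1 + j))
    intro i hi
    refine le_trans (le_of_eq ?_) (hd (i₀ + 1 + i) (by omega))
    congr 1
    push_cast; ring
  have h3 : (f i₀)⁻¹ ≤ C * 2 ^ (i₀ + 1) := h i₀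
  have fn : ∀ i, 0 ≤ (f i)⁻¹ := fun i => by positivity
  change ∏ i ∈ Finset.range (i₀ + 1 + r), (f i)⁻¹ ≤ _
  rw [Finset.prod_range_add, Finset.prod_range_succ]
  calc _ ≤ ((p : ℝ) ^ i₀ * (C * 2 ^ (i₀ + 1))) * (p : ℝ) ^ r := by
        apply mul_le_mul _ h2 (Finset.prod_nonneg fun i _ => fn _) (by positivity)
        exact mul_le_mul h1 h3 (fn _) (by positivity)
    _ = C * (2 ^ (i₀ + 1) * (p : ℝ) ^ (i₀ + r)) := by ring
    _ ≤ (C + 1) * (2 ^ (i₀ + 1 + r) * (p : ℝ) ^ (i₀ + 1 + r)) := by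
        have e1 : (2 : ℝ) ^ (i₀ + 1) ≤ 2 ^ (i₀ + 1 + r) :=
          pow_le_pow_right₀ one_le_two (by omega)
        have e2 : (p : ℝ) ^ (i₀ + r) ≤ (p : ℝ) ^ (i₀ + 1 + r) :=
          pow_le_pow_right₀ hp1 (by omega)
        have e3 : C ≤ C + 1 := by linarith
        exact mul_le_mul e3 (mul_le_mul e1 e2 (by positivity) (by positivity))
          (by positivity) (by positivity)
    _ = _ := by rw [mul_pow]

lemma final (V : Type*) [NormedAddCommGroup V] [IsUltrametricDist V] (v : ℕ → V) (A : ℕ → ℝ)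
    (hA : ExpBd A) (hA1 : ∀ l, 1 ≤ A l) (hv : ∀ l, ‖v (l + 1) - v l‖ ≤ A l * ‖v l‖) :
    ∃ ρ : ℝ, 0 < ρ ∧
      Filter.Tendsto (fun l : ℕ => ρ ^ (l + 1) * ‖v (l + 1) - v l‖)
        Filter.atTop (nhds 0) := by
  obtain ⟨A0, K, B, hK, hB, h⟩ := hA
  have hb : ∀ n, ‖v n‖ ≤ (∏ i ∈ Finset.range n, A i) * ‖v 0‖ := by
    intro n
    induction n with
    | zero => simp
    | succ n ih =>
      have h1 : ‖v (n + 1)‖ ≤ A n * ‖v n‖ := by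
        have e : v (n + 1) = (v (n + 1) - v n) + v n := by abel
        rw [e]
        refine (IsUltrametricDist.norm_add_le_max _ _).trans (max_le (hv n) ?_)
        exact le_mul_of_one_le_left (norm_nonneg _) (hA1 n)
      rw [Finset.prod_range_succ]
      calc _ ≤ A n * ‖v n‖ := h1
        _ ≤ A n * ((∏ i ∈ Finset.range n, A i) * ‖v 0‖) := mul_le_mul_of_nonneg_left ih (A0 n)
        _ = _ := by ring
  refine ⟨(2 * B)⁻¹, by positivity, ?_⟩
  have lim : Tendsto (fun l : ℕ => K * ‖v 0‖ * (1 / 2 : ℝ) ^ (l + 1)) atTop (nhds 0) := by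
    have := ((tendsto_add_atTop_iff_nat 1).2 (tendsto_pow_atTop_nhds_zero_of_lt_one
      (r := (1 / 2 : ℝ)) (by norm_num) (by norm_num))).const_mul (K * ‖v 0‖)
    simpa using this
  refine squeeze_zero (fun l => by positivity) (fun l => ?_) lim
  have : ‖v (l + 1) - v l‖ ≤ K * B ^ (l + 1) * ‖v 0‖ := by
    calc _ ≤ A l * ‖v l‖ := hv l
      _ ≤ A l * ((∏ i ∈ Finset.range l, A i) * ‖v 0‖) := mul_le_mul_of_nonneg_left (hb l) (A0 l)
      _ = (∏ i ∈ Finset.range (l + 1), A i) * ‖v 0‖ := by rw [Finset.prod_range_succ]; ring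
      _ ≤ _ := mul_le_mul_of_nonneg_right (h _) (norm_nonneg _)
  calc _ ≤ ((2 * B)⁻¹) ^ (l + 1) * (K * B ^ (l + 1) * ‖v 0‖) := by gcongr
    _ = K * ‖v 0‖ * ((2 * B)⁻¹ * B) ^ (l + 1) := by rw [mul_pow]; ring
    _ = _ := by
      congr 2
      field_simp

/-- **Claim 1 in the proof of Proposition 3.5.3.**
Let `V` be a `ℚ_p`-vector space with a nonarchimedean norm, let `σ_1, …, σ_N ∈ ℤ_p` be
`p`-adically non-Liouville, each either `0` or not a rational integer, `m ≥ 1` and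
`C > 1`.  If a sequence `(v_l)` in `V` satisfies
`‖v_l - v_{l-1}‖ ≤ C (∏_k ‖l - σ_k‖⁻¹ ‖l + σ_k‖⁻¹)^m ‖v_{l-1}‖` for all `l ≥ 1`,
then there is `ρ > 0` with `ρ^l ‖v_l - v_{l-1}‖ → 0` as `l → ∞`. -/
theorem stmt10 (p : ℕ) [Fact p.Prime] (V : Type*) [NormedAddCommGroup V]
    [NormedSpace ℚ_[p] V] [IsUltrametricDist V]
    (N : ℕ) (σ : Fin N → ℤ_[p])
    (hNL : ∀ k, IsPAdicNonLiouville (σ k))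
    (hNI : ∀ k, σ k = 0 ∨ ∀ i : ℤ, ((σ k : ℚ_[p])) ≠ (i : ℚ_[p]))
    (m : ℕ) (hm : 1 ≤ m) (C : ℝ) (hC : 1 < C)
    (v : ℕ → V)
    (hv : ∀ l : ℕ,
      ‖v (l + 1) - v l‖ ≤
        C * (∏ k : Fin N,
            ‖((l + 1 : ℕ) : ℚ_[p]) - (σ k : ℚ_[p])‖⁻¹ *
            ‖((l + 1 : ℕ) : ℚ_[p]) + (σ k : ℚ_[p])‖⁻¹) ^ m * ‖v l‖) :
    ∃ ρ : ℝ, 0 < ρ ∧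
      Filter.Tendsto (fun l : ℕ => ρ ^ (l + 1) * ‖v (l + 1) - v l‖)
        Filter.atTop (nhds 0) := by
  have hne : ∀ k (s : ℕ), (σ k : ℚ_[p]) + ((s + 1 : ℕ) : ℚ_[p]) ≠ 0 ∧
      -(σ k : ℚ_[p]) + ((s + 1 : ℕ) : ℚ_[p]) ≠ 0 := by
    intro k s
    rcases hNI k with h0 | h0
    · have : ((s + 1 : ℕ) : ℚ_[p]) ≠ 0 := by exact_mod_cast s.succ_ne_zero
      simpa only [h0, PadicInt.coe_zero, neg_zero, zero_add, and_self] using this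
    · constructor
      · intro h
        apply h0 (-((s + 1 : ℕ) : ℤ))
        rw [eq_neg_of_add_eq_zero_left h]; push_cast; ring
      · intro h
        apply h0 ((s + 1 : ℕ) : ℤ)
        rw [neg_add_eq_zero.1 h]; push_cast; ring
  have hA : ExpBd (fun l : ℕ => C * (∏ k : Fin N,
            ‖((l + 1 : ℕ) : ℚ_[p]) - (σ k : ℚ_[p])‖⁻¹ *
            ‖((l + 1 : ℕ) : ℚ_[p]) + (σ k : ℚ_[p])‖⁻¹) ^ m) := by
    refine (ExpBd.const (by linarith)).mul (ExpBd.pow (ExpBd.prod _ fun k => ExpBd.mul ?_ ?_) m)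
    · obtain ⟨D, hD, h⟩ := hNL k 2 one_lt_two
      have := key p (-(σ k : ℚ_[p])) D hD (fun s => by
        have e : ‖-(σ k : ℚ_[p]) + ((s + 1 : ℕ) : ℚ_[p])‖ =
            ‖(σ k : ℚ_[p]) + ((-((s + 1 : ℕ) : ℤ) : ℤ) : ℚ_[p])‖ := by
          rw [← norm_neg]; congr 1; push_cast; ring
        have h' := h (-((s + 1 : ℕ) : ℤ)) (by
          rw [← norm_ne_zero_iff, ← e, norm_ne_zero_iff]; exact (hne k s).2)
        rw [e]
        rwa [Int.natAbs_neg, Int.natAbs_natCast] at h')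
      simpa only [neg_add_eq_sub] using this
    · obtain ⟨D, hD, h⟩ := hNL k 2 one_lt_two
      have := key p (σ k : ℚ_[p]) D hD (fun s => by
        have h' := h ((s + 1 : ℕ) : ℤ) (by rw [Int.cast_natCast]; exact (hne k s).1)
        rwa [Int.natAbs_natCast, Int.cast_natCast] at h')
      simpa only [add_comm (σ k : ℚ_[p])] using this
  have hA1 : ∀ l : ℕ, 1 ≤ C * (∏ k : Fin N,
            ‖((l + 1 : ℕ) : ℚ_[p]) - (σ k : ℚ_[p])‖⁻¹ *
            ‖((l + 1 : ℕ) : ℚ_[p]) + (σ k : ℚ_[p])‖⁻¹) ^ m := by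
    intro l
    refine one_le_mul_of_one_le_of_one_le hC.le (one_le_pow₀ ?_)
    refine Finset.one_le_prod fun k _ => ?_
    have n1 : ‖((l + 1 : ℕ) : ℚ_[p]) - (σ k : ℚ_[p])‖ ≤ 1 := by
      have := PadicInt.norm_le_one (((l + 1 : ℕ) : ℤ_[p]) - σ k)
      rwa [PadicInt.norm_def, PadicInt.coe_sub, PadicInt.coe_natCast] at this
    have n2 : ‖((l + 1 : ℕ) : ℚ_[p]) + (σ k : ℚ_[p])‖ ≤ 1 := by
      have := PadicInt.norm_le_one (((l + 1 : ℕ) : ℤ_[p]) + σ k)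
      rwa [PadicInt.norm_def, PadicInt.coe_add, PadicInt.coe_natCast] at this
    refine one_le_mul_of_one_le_of_one_le ((one_le_inv₀ ?_).2 n1) ((one_le_inv₀ ?_).2 n2)
    · rw [norm_pos_iff, ← neg_add_eq_sub]; exact (hne k l).2
    · rw [norm_pos_iff, add_comm]; exact (hne k l).1
  exact final V v _ hA hA1 hv
end

section
/- Let p be a prime and let V be a ℚ_p-vector space equipped with a nonarchimedean norm ‖·‖. For q ∈ ℕ put P_q(y) := ∏_{j=1}^q ((j−1) − y)/j ∈ ℚ_p[y]. Let ∂ : V → V be a ℚ_p-linear map such that for every η ∈ (0,1) there exists C_η > 0 with ‖(P_q(∂))(v)‖ ≤ C_η·η^{−q}·‖v‖ for all q ∈ ℕ and all v ∈ V. Let ξ_1, …, ξ_{n₀} ∈ ℤ_p be such that every difference ξ_k − ξ_{k'} is p-adically non-Liouville and is either 0 or not a rational integer, let m ≥ 1 be an integer and Q ∈ ℚ_p[x] a polynomial, and define D_l(x) := Q(x) · ∏_{k=1}^{n₀} ∏_{j=1}^l ( (j − (x − ξ_k)) / (j − (ξ_1 − ξ_k)) )^m ∈ ℚ_p[x] (the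 denominators j − (ξ_1 − ξ_k) are nonzero). Then for every η ∈ (0,1) and every ε > 0 there exists L such that for all l ≥ L and all v ∈ V one has ‖(D_l(∂))(v)‖ ≤ ε·η^{−l}·‖v‖; that is, the operator norms of D_l(∂) multiplied by η^l tend to 0. -/
open Polynomial

/-- The polynomial `P_q(y) = ∏_{j=1}^q ((j-1) - y)/j ∈ ℚ_p[y]`. -/
noncomputable def Ppoly (p : ℕ) [Fact p.Prime] (q : ℕ) : Polynomial ℚ_[p] :=
  ∏ j ∈ Finset.Icc 1 q,
    Polynomial.C (((j : ℚ_[p]))⁻¹) * (Polynomial.C ((j : ℚ_[p]) - 1) - Polynomial.X)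

/-- The polynomial `D_l(x) = Q(x) ∏_{k=1}^{n₀} ∏_{j=1}^l ((j - (x - ξ_k)) /
(j - (ξ_1 - ξ_k)))^m ∈ ℚ_p[x]` (with `ξ_1 = ξ 0`) from Proposition 3.6.2. -/
noncomputable def Dpoly (p : ℕ) [Fact p.Prime] (n₀ : ℕ) (hn₀ : 0 < n₀)
    (ξ : Fin n₀ → ℤ_[p]) (m : ℕ) (Q : Polynomial ℚ_[p]) (l : ℕ) : Polynomial ℚ_[p] :=
  Q * ∏ k : Fin n₀, ∏ j ∈ Finset.Icc 1 l,
    (Polynomial.C (((j : ℚ_[p]) - ((ξ ⟨0, hn₀⟩ : ℚ_[p]) - (ξ k : ℚ_[p])))⁻¹) *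
      (Polynomial.C ((j : ℚ_[p]) + (ξ k : ℚ_[p])) - Polynomial.X)) ^ m


/-- Subexponential growth of a sequence of polynomials evaluated at `T`. -/
def SubExp {p : ℕ} [Fact p.Prime] {V : Type*} [NormedAddCommGroup V]
    [NormedSpace ℚ_[p] V] (T : Module.End ℚ_[p] V) (A : ℕ → Polynomial ℚ_[p]) : Prop :=
  ∀ σ : ℝ, 1 < σ → ∃ K : ℝ, 0 < K ∧ ∀ l : ℕ, ∀ v : V, ‖(Polynomial.aeval T (A l)) v‖ ≤ K * σ ^ l * ‖v‖

section helpers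
variable {p : ℕ} [Fact p.Prime] {V : Type*} [NormedAddCommGroup V]
    [NormedSpace ℚ_[p] V] {T : Module.End ℚ_[p] V}

lemma SubExp.mul {A B : ℕ → Polynomial ℚ_[p]} (hA : SubExp T A) (hB : SubExp T B) :
    SubExp T (A * B) := by
  intro σ hσ
  have h1 : 1 < Real.sqrt σ := by
    rw [Real.lt_sqrt (by norm_num)]; simpa using hσ
  obtain ⟨K, hK, h⟩ := hA _ h1
  obtain ⟨K', hK', h'⟩ := hB _ h1
  refine ⟨K * K', by positivity, fun l v => ?_⟩
  rw [Pi.mul_apply, map_mul, Module.End.mul_apply]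
  calc _ ≤ K * Real.sqrt σ ^ l * ‖(aeval T (B l)) v‖ := h _ _
    _ ≤ K * Real.sqrt σ ^ l * (K' * Real.sqrt σ ^ l * ‖v‖) := by gcongr; exact h' _ _
    _ = K * K' * (Real.sqrt σ * Real.sqrt σ) ^ l * ‖v‖ := by rw [mul_pow]; ring
    _ = _ := by rw [Real.mul_self_sqrt (by linarith)]

lemma SubExp.add {A B : ℕ → Polynomial ℚ_[p]} (hA : SubExp T A) (hB : SubExp T B) :
    SubExp T (A + B) := by
  intro σ hσ
  obtain ⟨K, hK, h⟩ := hA _ hσ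
  obtain ⟨K', hK', h'⟩ := hB _ hσ
  refine ⟨K + K', by positivity, fun l v => ?_⟩
  rw [Pi.add_apply, map_add, LinearMap.add_apply]
  refine (norm_add_le _ _).trans ((add_le_add (h l v) (h' l v)).trans (le_of_eq ?_))
  ring

lemma SubExp.scalar {c : ℕ → ℚ_[p]}
    (hc : ∀ σ : ℝ, 1 < σ → ∃ K : ℝ, 0 < K ∧ ∀ l : ℕ, ‖c l‖ ≤ K * σ ^ l) :
    SubExp T (fun l => C (c l)) := by
  intro σ hσ
  obtain ⟨K, hK, h⟩ := hc _ hσ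
  refine ⟨K, hK, fun l v => ?_⟩
  rw [aeval_C, Module.algebraMap_end_apply, norm_smul]
  gcongr
  exact h l

lemma SubExp.const (c : ℚ_[p]) : SubExp T (fun _ => C c) := by
  apply SubExp.scalar
  intro σ hσ
  refine ⟨‖c‖ + 1, by positivity, fun l => ?_⟩
  have : 1 ≤ σ ^ l := one_le_pow₀ hσ.le
  nlinarith [norm_nonneg c]

/-- The submonoid of subexponential sequences. -/
def subExpMonoid (T : Module.End ℚ_[p] V) : Submonoid (ℕ → Polynomial ℚ_[p]) where
  carrier := {A | SubExp T A}
  mul_mem' := SubExp.mul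
  one_mem' := by
    have := SubExp.const (T := T) 1
    simpa using! this

lemma SubExp.poly (hX : SubExp T (fun _ => X)) (Q : Polynomial ℚ_[p]) :
    SubExp T (fun _ => Q) := by
  induction Q using Polynomial.induction_on' with
  | add f g hf hg => exact hf.add hg
  | monomial n a =>
    rw [← C_mul_X_pow_eq_monomial]
    exact (SubExp.const a).mul ((subExpMonoid T).pow_mem hX n)

lemma G_bound (M : ℝ) (n : ℕ) : ∀ y : ℚ_[p], (∀ j ≤ n, y + j ≠ 0 ∧ ‖y + (j : ℚ_[p])‖⁻¹ ≤ M) →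
    ‖(n.factorial : ℚ_[p]) * (∏ j ∈ Finset.range (n + 1), (y + j))⁻¹‖ ≤ M := by
  induction n with
  | zero => intro y h; simpa using (h 0 le_rfl).2
  | succ n ih =>
    intro y h
    have h1 := ih y (fun j hj => h j (by omega))
    have h2 := ih (y + 1) (fun j hj => by
      have := h (j + 1) (by omega)
      push_cast at this
      rwa [show y + 1 + (j : ℚ_[p]) = y + (j + 1) by ring])
    have key : (((n + 1).factorial : ℕ) : ℚ_[p]) * (∏ j ∈ Finset.range (n + 1 + 1), (y + j))⁻¹
        = (n.factorial : ℚ_[p]) * (∏ j ∈ Finset.range (n + 1), (y + j))⁻¹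
        - (n.factorial : ℚ_[p]) * (∏ j ∈ Finset.range (n + 1), (y + 1 + j))⁻¹ := by
      have e1 : ∏ j ∈ Finset.range (n + 1), (y + 1 + (j : ℚ_[p])) =
          (∏ j ∈ Finset.range n, (y + 1 + (j : ℚ_[p]))) * (y + (n + 1)) := by
        rw [Finset.prod_range_succ]; ring
      have e2 : ∏ j ∈ Finset.range (n + 1), (y + (j : ℚ_[p])) =
          (∏ j ∈ Finset.range n, (y + 1 + (j : ℚ_[p]))) * y := by
        rw [Finset.prod_range_succ']
        push_cast
        rw [add_zero]
        congr 1
        exact Finset.prod_congr rfl fun j _ => by ring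
      rw [Finset.prod_range_succ _ (n + 1), e1, e2]
      have hP : ∏ j ∈ Finset.range n, (y + 1 + (j : ℚ_[p])) ≠ 0 := by
        rw [Finset.prod_ne_zero_iff]
        intro j hj
        have := (h (j + 1) (by simp at hj; omega)).1
        push_cast at this
        rwa [show y + 1 + (j : ℚ_[p]) = y + (j + 1) by ring]
      have hy : y ≠ 0 := by simpa using (h 0 (by omega)).1
      have hy2 : y + ((n : ℚ_[p]) + 1) ≠ 0 := by simpa using (h (n + 1) le_rfl).1
      rw [Nat.factorial_succ]
      push_cast
      field_simp
      ring
    rw [key]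
    exact by
      rw [sub_eq_add_neg]
      refine (IsUltrametricDist.norm_add_le_max _ _).trans (max_le h1 ?_)
      rwa [norm_neg]

lemma prod_Icc_id_eq_fac (n : ℕ) : ∏ j ∈ Finset.Icc 1 n, j = n.factorial := by
  induction n with
  | zero => simp
  | succ n ih => rw [Finset.prod_Icc_succ_top (by omega), ih, Nat.factorial_succ, mul_comm]

lemma ratio_bound (M : ℝ) (hM : 1 ≤ M) (b : ℚ_[p]) (l : ℕ)
    (h : ∀ j ∈ Finset.Icc 1 l, (j : ℚ_[p]) - b ≠ 0 ∧ ‖(j : ℚ_[p]) - b‖⁻¹ ≤ M) :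
    ‖∏ j ∈ Finset.Icc 1 l, ((j : ℚ_[p]) * ((j : ℚ_[p]) - b)⁻¹)‖ ≤ M := by
  cases l with
  | zero => simpa using hM
  | succ n =>
    have h1 := G_bound M n (1 - b) (fun j hj => by
      have := h (j + 1) (by simp; omega)
      push_cast at this
      rwa [show 1 - b + (j : ℚ_[p]) = j + 1 - b by ring])
    have e : ∏ j ∈ Finset.Icc 1 (n + 1), ((j : ℚ_[p]) * ((j : ℚ_[p]) - b)⁻¹) =
        ((n + 1 : ℕ) : ℚ_[p]) *
          ((n.factorial : ℚ_[p]) * (∏ j ∈ Finset.range (n + 1), (1 - b + j))⁻¹) := by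
      rw [Finset.prod_mul_distrib, Finset.prod_inv_distrib, ← mul_assoc]
      congr 1
      · rw [← Nat.cast_prod, prod_Icc_id_eq_fac, Nat.factorial_succ, Nat.cast_mul]
      · congr 1
        rw [← Finset.Ico_add_one_right_eq_Icc, Finset.prod_Ico_eq_prod_range]
        refine Finset.prod_congr (by simp) fun j _ => ?_
        push_cast; ring
    rw [e, norm_mul]
    have h2 : ‖((n + 1 : ℕ) : ℚ_[p])‖ ≤ 1 := by
      simpa using Padic.norm_int_le_one (p := p) ((n + 1 : ℕ) : ℤ)
    calc _ ≤ 1 * M := by gcongr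
      _ = M := one_mul _

lemma choose_eq_prod (r : Polynomial ℚ_[p]) (l : ℕ) :
    Ring.choose r l = ∏ j ∈ Finset.Icc 1 l, C ((j : ℚ_[p])⁻¹) * (r - C ((j : ℚ_[p]) - 1)) := by
  have h : (l.factorial : Polynomial ℚ_[p]) * Ring.choose r l =
      ∏ j ∈ Finset.Icc 1 l, (r - C ((j : ℚ_[p]) - 1)) := by
    rw [← nsmul_eq_mul, ← Ring.descPochhammer_eq_factorial_smul_choose]
    induction l with
    | zero => simp
    | succ n ih =>
      rw [Finset.prod_Icc_succ_top (by omega), ← ih, descPochhammer_succ_right, smeval_mul,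
        smeval_sub, smeval_X, smeval_natCast]
      simp
  have h0 : (l.factorial : Polynomial ℚ_[p]) ≠ 0 := by exact_mod_cast l.factorial_ne_zero
  apply mul_left_cancel₀ h0
  rw [h, Finset.prod_mul_distrib, ← mul_assoc, ← map_prod, Finset.prod_inv_distrib,
    ← Nat.cast_prod, prod_Icc_id_eq_fac, ← C_eq_natCast, ← C_mul,
    mul_inv_cancel₀ (by exact_mod_cast l.factorial_ne_zero), C_1, one_mul]

lemma Ppoly_eq (q : ℕ) : Ppoly p q = (-1) ^ q * Ring.choose (X : Polynomial ℚ_[p]) q := by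
  rw [choose_eq_prod, Ppoly]
  have : (-1 : Polynomial ℚ_[p]) ^ q = ∏ j ∈ Finset.Icc 1 q, (-1) := by simp
  rw [this, ← Finset.prod_mul_distrib]
  exact Finset.prod_congr rfl fun j _ => by ring

lemma B_eq (a : ℤ_[p]) (l : ℕ) :
    ∏ j ∈ Finset.Icc 1 l, (C ((j : ℚ_[p])⁻¹) * (C ((j : ℚ_[p]) + (a : ℚ_[p])) - X)) =
    ∑ ij ∈ Finset.HasAntidiagonal.antidiagonal l,
      C ((((-1) ^ (l + ij.1) * Ring.choose (-a - 1) ij.2 : ℤ_[p])) : ℚ_[p]) * Ppoly p ij.1 := by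
  let f : ℤ_[p] →+* Polynomial ℚ_[p] := C.comp PadicInt.Coe.ringHom
  have hf : ∀ z : ℤ_[p], f z = C (z : ℚ_[p]) := fun z => rfl
  have h1 : ∏ j ∈ Finset.Icc 1 l, (C ((j : ℚ_[p])⁻¹) * (C ((j : ℚ_[p]) + (a : ℚ_[p])) - X)) =
      (-1) ^ l * Ring.choose (X + f (-a - 1)) l := by
    rw [choose_eq_prod]
    have : (-1 : Polynomial ℚ_[p]) ^ l = ∏ j ∈ Finset.Icc 1 l, (-1) := by simp
    rw [this, ← Finset.prod_mul_distrib]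
    refine Finset.prod_congr rfl fun j _ => ?_
    rw [hf]
    push_cast
    simp only [map_add, map_sub, map_neg, map_one]
    ring
  rw [h1, Ring.add_choose_eq _ (Commute.all _ _), Finset.mul_sum]
  refine Finset.sum_congr rfl fun ij _ => ?_
  rw [← hf, Ppoly_eq, map_mul, Ring.map_choose, map_pow, map_neg, map_one, pow_add]
  have : ((-1 : Polynomial ℚ_[p]) ^ ij.1) * (-1) ^ ij.1 = 1 := by
    rw [← mul_pow]; simp
  linear_combination (-(-1) ^ l * Ring.choose X ij.1 * Ring.choose (f (-a - 1)) ij.2) * this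

lemma SubExp.B [IsUltrametricDist V] (hP : SubExp T (Ppoly p)) (a : ℤ_[p]) :
    SubExp T (fun l => ∏ j ∈ Finset.Icc 1 l,
      (C ((j : ℚ_[p])⁻¹) * (C ((j : ℚ_[p]) + (a : ℚ_[p])) - X))) := by
  intro σ hσ
  obtain ⟨K, hK, h⟩ := hP σ hσ
  refine ⟨K, hK, fun l v => ?_⟩
  simp only [B_eq, map_sum, LinearMap.sum_apply]
  refine IsUltrametricDist.norm_sum_le_of_forall_le_of_nonneg (by positivity) fun ij hij => ?_
  rw [map_mul, aeval_C, Module.End.mul_apply, Module.algebraMap_end_apply, norm_smul]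
  have hle : ij.1 ≤ l := by have := Finset.HasAntidiagonal.mem_antidiagonal.1 hij; omega
  calc _ ≤ 1 * (K * σ ^ ij.1 * ‖v‖) := by
        gcongr
        · exact PadicInt.norm_le_one _
        · exact h _ _
    _ = K * σ ^ ij.1 * ‖v‖ := one_mul _
    _ ≤ _ := by gcongr; exact hσ.le

end helpers

/-- **Operator-norm decay from the proof of Proposition 3.6.2.**
Let `∂` be an endomorphism of a nonarchimedean normed `ℚ_p`-vector space `V`
satisfying the log-convergence condition: for every `η ∈ (0,1)` there is `C_η > 0`
with `‖P_q(∂) v‖ ≤ C_η η⁻¹^q ‖v‖` for all `q` and `v`.  Let `ξ_1, …, ξ_{n₀} ∈ ℤ_p`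
have all differences `p`-adically non-Liouville and each difference `0` or not a
rational integer, let `m ≥ 1` and `Q ∈ ℚ_p[x]`.  Then for every `η ∈ (0,1)` and
`ε > 0` there is `L` with `‖D_l(∂) v‖ ≤ ε η⁻¹^l ‖v‖` for all `l ≥ L` and `v ∈ V`;
i.e. the operator norms of `D_l(∂)` times `η^l` tend to `0`. -/
theorem stmt11 (p : ℕ) [Fact p.Prime] (V : Type*) [NormedAddCommGroup V]
    [NormedSpace ℚ_[p] V] [IsUltrametricDist V]
    (T : Module.End ℚ_[p] V)
    (hlog : ∀ η : ℝ, 0 < η → η < 1 → ∃ Cη : ℝ, 0 < Cη ∧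
      ∀ q : ℕ, ∀ v : V, ‖(Polynomial.aeval T (Ppoly p q)) v‖ ≤ Cη * η⁻¹ ^ q * ‖v‖)
    (n₀ : ℕ) (hn₀ : 0 < n₀) (ξ : Fin n₀ → ℤ_[p])
    (hNL : ∀ k k' : Fin n₀, IsPAdicNonLiouville (ξ k - ξ k'))
    (hNI : ∀ k k' : Fin n₀, ξ k - ξ k' = 0 ∨
      ∀ i : ℤ, ((ξ k - ξ k' : ℤ_[p]) : ℚ_[p]) ≠ (i : ℚ_[p]))
    (m : ℕ) (hm : 1 ≤ m) (Q : Polynomial ℚ_[p]) :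
    ∀ η : ℝ, 0 < η → η < 1 → ∀ ε : ℝ, 0 < ε → ∃ L : ℕ, ∀ l : ℕ, L ≤ l → ∀ v : V,
      ‖(Polynomial.aeval T (Dpoly p n₀ hn₀ ξ m Q l)) v‖ ≤ ε * η⁻¹ ^ l * ‖v‖ := by
  have hP : SubExp T (Ppoly p) := by
    intro σ hσ
    obtain ⟨K, hK, h⟩ := hlog σ⁻¹ (by positivity) (inv_lt_one_of_one_lt₀ hσ)
    exact ⟨K, hK, by simpa using h⟩
  have hX : SubExp T (fun _ => X) := by
    obtain ⟨K, hK, h⟩ := hP 2 (by norm_num)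
    intro σ hσ
    refine ⟨K * 2, by positivity, fun l v => ?_⟩
    have h1 := h 1 v
    have hs : 1 ≤ σ ^ l := one_le_pow₀ hσ.le
    simp only [Ppoly, Finset.Icc_self, Finset.prod_singleton, Nat.cast_one, inv_one, sub_self,
      map_zero, zero_sub, map_one, one_mul, map_neg, LinearMap.neg_apply, norm_neg, pow_one] at h1
    refine h1.trans ?_
    exact mul_le_mul_of_nonneg_right (le_mul_of_one_le_right (by positivity) hs) (norm_nonneg v)
  have hfac : ∀ k : Fin n₀, SubExp T (fun l => ∏ j ∈ Finset.Icc 1 l,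
      (C (((j : ℚ_[p]) - ((ξ ⟨0, hn₀⟩ : ℚ_[p]) - (ξ k : ℚ_[p])))⁻¹) *
      (C ((j : ℚ_[p]) + (ξ k : ℚ_[p])) - X))) := by
    intro k
    have hs : SubExp T (fun l => C (∏ j ∈ Finset.Icc 1 l, ((j : ℚ_[p]) *
        ((j : ℚ_[p]) - ((ξ ⟨0, hn₀⟩ : ℚ_[p]) - (ξ k : ℚ_[p])))⁻¹))) := by
      apply SubExp.scalar
      intro σ hσ
      obtain ⟨K, hK, h⟩ := hNL ⟨0, hn₀⟩ k σ hσ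
      refine ⟨K + 1, by positivity, fun l => ?_⟩
      have hsl : 1 ≤ σ ^ l := one_le_pow₀ hσ.le
      refine ratio_bound _ (by nlinarith) _ _ fun j hj => ?_
      have hj' := Finset.mem_Icc.1 hj
      have hne : (j : ℚ_[p]) - ((ξ ⟨0, hn₀⟩ : ℚ_[p]) - (ξ k : ℚ_[p])) ≠ 0 := by
        rcases hNI ⟨0, hn₀⟩ k with h0 | h0
        · rw [← PadicInt.coe_sub, h0]
          simp
          omega
        · have := h0 j
          push_cast at this
          exact sub_ne_zero.2 this.symm
      refine ⟨hne, ?_⟩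
      have e : ((ξ ⟨0, hn₀⟩ - ξ k : ℤ_[p]) : ℚ_[p]) + ((-(j : ℤ) : ℤ) : ℚ_[p]) =
          -((j : ℚ_[p]) - ((ξ ⟨0, hn₀⟩ : ℚ_[p]) - (ξ k : ℚ_[p]))) := by
        push_cast; ring
      have h1 := h (-(j : ℤ)) (by rw [e]; exact neg_ne_zero.2 hne)
      rw [e, norm_neg, Int.natAbs_neg, Int.natAbs_natCast] at h1
      refine h1.trans ?_
      have : σ ^ j ≤ σ ^ l := pow_le_pow_right₀ hσ.le hj'.2
      nlinarith
    have := hs.mul (SubExp.B hP (ξ k))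
    convert this using 1
    ext1 l
    rw [Pi.mul_apply, map_prod, ← Finset.prod_mul_distrib]
    refine Finset.prod_congr rfl fun j hj => ?_
    have hj0 : (j : ℚ_[p]) ≠ 0 := by
      have := Finset.mem_Icc.1 hj
      exact_mod_cast (by omega : j ≠ 0)
    rw [← mul_assoc, ← C_mul]
    congr 2
    field_simp
  have hD : SubExp T (Dpoly p n₀ hn₀ ξ m Q) := by
    have h1 := (SubExp.poly hX Q).mul ((subExpMonoid T).prod_mem (t := Finset.univ)
      (fun k _ => (subExpMonoid T).pow_mem (hfac k) m))
    convert h1 using 1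
    ext1 l
    simp [Dpoly, Finset.prod_pow]
  intro η h0 h1 ε hε
  have hη : 1 < η⁻¹ := (one_lt_inv₀ h0).2 h1
  have hσ : 1 < Real.sqrt η⁻¹ := by
    rw [Real.lt_sqrt (by norm_num)]; simpa using hη
  obtain ⟨K, hK, h⟩ := hD _ hσ
  obtain ⟨L, hL⟩ := pow_unbounded_of_one_lt (K / ε) hσ
  refine ⟨L, fun l hl v => (h l v).trans ?_⟩
  refine mul_le_mul_of_nonneg_right ?_ (norm_nonneg v)
  have h2 : K / ε < Real.sqrt η⁻¹ ^ l := hL.trans_le (pow_le_pow_right₀ hσ.le hl)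
  rw [div_lt_iff₀ hε] at h2
  calc K * Real.sqrt η⁻¹ ^ l ≤ (Real.sqrt η⁻¹ ^ l * ε) * Real.sqrt η⁻¹ ^ l := by gcongr
    _ = ε * (Real.sqrt η⁻¹ * Real.sqrt η⁻¹) ^ l := by rw [mul_pow]; ring
    _ = _ := by rw [Real.mul_self_sqrt (by positivity)]
end

section
/- Let K be a field of characteristic zero, W a K-vector space, and N : W → W a K-linear map. Let m ≥ 1 and let ξ_1, …, ξ_{n₀} ∈ K satisfy ∏_{k=1}^{n₀} (N − ξ_k)^m = 0 and assume that no difference ξ_k − ξ_{k'} is a nonzero rational integer. Let Q ∈ K[x]. For j ∈ ℤ and l ∈ ℕ define the K-linear map D_l^{(j)} := Q(N + j) ∘ ∏_{k=1}^{n₀} ∏_{i=1}^{l} [ ((i − (ξ_1 − ξ_k))·(i + (ξ_1 − ξ_k)))^{−1} · (i − (N + j − ξ_k)) ∘ (i + (N + j − ξ_k)) ]^m (all scalar denominators (i ± (ξ_1 − ξ_k)) are nonzero, and all factors are polynomials in N, hence commute). Then: (a) D_l^{(j)} = 0 whenever j ≠ 0 and |j| ≤ l; (b) if moreover the image of Q(N)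 is contained in the kernel of N − ξ_1, then D_l^{(0)} = Q(N) for every l. -/
open Polynomial

/-- The polynomial over `K` whose evaluation at `N` is the operator
`D_l^{(j)} = Q(N + j) ∘ ∏_{k=1}^{n₀} ∏_{i=1}^{l}
[((i - (ξ_1 - ξ_k))(i + (ξ_1 - ξ_k)))⁻¹ (i - (N + j - ξ_k))(i + (N + j - ξ_k))]^m`
(with `ξ_1 = ξ 0`), from the proof of claim 1 of Lemma 3.4.1. -/
noncomputable def DjlPoly (K : Type*) [Field K] (n₀ : ℕ) (hn₀ : 0 < n₀)
    (ξ : Fin n₀ → K) (m : ℕ) (Q : Polynomial K) (j : ℤ) (l : ℕ) : Polynomial K :=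
  Q.comp (Polynomial.X + Polynomial.C (j : K)) *
    ∏ k : Fin n₀, ∏ i ∈ Finset.Icc 1 l,
      (Polynomial.C ((((i : K) - (ξ ⟨0, hn₀⟩ - ξ k)) *
            ((i : K) + (ξ ⟨0, hn₀⟩ - ξ k)))⁻¹) *
        ((Polynomial.C (i : K) - (Polynomial.X + Polynomial.C ((j : K) - ξ k))) *
          (Polynomial.C (i : K) + (Polynomial.X + Polynomial.C ((j : K) - ξ k))))) ^ m

/-- **Termwise computation of the operators `D_l` (claim 1 of Lemma 3.4.1).**
Let `K` be a field of characteristic zero, `W` a `K`-vector space and `N` an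
endomorphism of `W` with `∏_{k=1}^{n₀} (N - ξ_k)^m = 0`, where no difference
`ξ_k - ξ_{k'}` is a nonzero rational integer.  Then (a) `D_l^{(j)} = 0` whenever
`j ≠ 0` and `|j| ≤ l`; and (b) if the image of `Q(N)` lies in the kernel of
`N - ξ_1` then `D_l^{(0)} = Q(N)` for every `l`. -/
theorem stmt12 (K : Type*) [Field K] [CharZero K]
    (W : Type*) [AddCommGroup W] [Module K W]
    (N : Module.End K W)
    (m : ℕ) (hm : 1 ≤ m) (n₀ : ℕ) (hn₀ : 0 < n₀) (ξ : Fin n₀ → K)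
    (hann : Polynomial.aeval N
      (∏ k : Fin n₀, (Polynomial.X - Polynomial.C (ξ k)) ^ m) = 0)
    (hNID : ∀ k k' : Fin n₀, ∀ i : ℤ, i ≠ 0 → ξ k - ξ k' ≠ (i : K))
    (Q : Polynomial K) :
    (∀ l : ℕ, ∀ j : ℤ, j ≠ 0 → |j| ≤ (l : ℤ) →
      Polynomial.aeval N (DjlPoly K n₀ hn₀ ξ m Q j l) = 0) ∧
    ((∀ w : W, N (Polynomial.aeval N Q w) = ξ ⟨0, hn₀⟩ • (Polynomial.aeval N Q w)) →
      ∀ l : ℕ, Polynomial.aeval N (DjlPoly K n₀ hn₀ ξ m Q 0 l) =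
        Polynomial.aeval N Q) := by
  constructor
  · intro l j hj hjl
    have hdvd : (∏ k : Fin n₀, (Polynomial.X - Polynomial.C (ξ k)) ^ m) ∣
        DjlPoly K n₀ hn₀ ξ m Q j l := by
      unfold DjlPoly
      apply Dvd.dvd.mul_left
      apply Finset.prod_dvd_prod_of_dvd
      intro k _
      have hmem : j.natAbs ∈ Finset.Icc 1 l := by
        rw [Finset.mem_Icc]
        rw [abs_le] at hjl
        omega
      refine dvd_trans ?_ (Finset.dvd_prod_of_mem _ hmem)
      apply pow_dvd_pow_of_dvd
      apply Dvd.dvd.mul_left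
      rcases le_total 0 j with h | h
      · have e : ((j.natAbs : ℕ) : K) = (j : K) := by
          have : ((j.natAbs : ℕ) : ℤ) = j := by omega
          rw [← Int.cast_natCast, this]
        apply Dvd.dvd.mul_right
        rw [e]
        refine ⟨-1, ?_⟩
        simp only [Polynomial.C_sub]
        ring
      · have e : ((j.natAbs : ℕ) : K) = -(j : K) := by
          have : ((j.natAbs : ℕ) : ℤ) = -j := by omega
          rw [← Int.cast_natCast, this, Int.cast_neg]
        apply Dvd.dvd.mul_left
        rw [e]
        refine ⟨1, ?_⟩
        simp only [Polynomial.C_sub, Polynomial.C_neg]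
        ring
    obtain ⟨r, hr⟩ := hdvd
    rw [hr, map_mul, hann, zero_mul]
  · intro hQ l
    have key : ∀ p : Polynomial K, p.eval (ξ ⟨0, hn₀⟩) = 1 →
        Polynomial.aeval N (Q * p) = Polynomial.aeval N Q := by
      intro p hp
      obtain ⟨r, hr⟩ := Polynomial.X_sub_C_dvd_sub_C_eval (a := ξ ⟨0, hn₀⟩) (p := p)
      have h0 : Polynomial.aeval N ((Polynomial.X - Polynomial.C (ξ ⟨0, hn₀⟩)) * Q) = 0 := by
        ext w
        simp [hQ w, sub_eq_zero, Module.algebraMap_end_apply]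
      have : Q * p = Q + r * ((Polynomial.X - Polynomial.C (ξ ⟨0, hn₀⟩)) * Q) := by
        rw [hp, Polynomial.C_1] at hr
        linear_combination Q * hr
      rw [this, map_add, map_mul, h0, mul_zero, add_zero]
    unfold DjlPoly
    have hc : Q.comp (Polynomial.X + Polynomial.C ((0 : ℤ) : K)) = Q := by simp
    rw [hc]
    apply key
    rw [Polynomial.eval_prod]
    apply Finset.prod_eq_one
    intro k _
    rw [Polynomial.eval_prod]
    apply Finset.prod_eq_one
    intro i hi
    have hi1 : 1 ≤ i := (Finset.mem_Icc.mp hi).1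
    have h1 : (i : K) - (ξ ⟨0, hn₀⟩ - ξ k) ≠ 0 := by
      intro h
      apply hNID ⟨0, hn₀⟩ k (i : ℤ) (by omega)
      push_cast
      linear_combination -h
    have h2 : (i : K) + (ξ ⟨0, hn₀⟩ - ξ k) ≠ 0 := by
      intro h
      apply hNID ⟨0, hn₀⟩ k (-(i : ℤ)) (by omega)
      push_cast
      linear_combination h
    have h3 := inv_mul_cancel₀ (mul_ne_zero h1 h2)
    simp only [Polynomial.eval_pow, Polynomial.eval_mul, Polynomial.eval_C,
      Polynomial.eval_sub, Polynomial.eval_add, Polynomial.eval_X]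
    have h4 : ξ ⟨0, hn₀⟩ + (((0 : ℤ) : K) - ξ k) = ξ ⟨0, hn₀⟩ - ξ k := by
      push_cast
      ring
    rw [h4, h3, one_pow]
end

section
/- Let p be a prime and let L be a complete nonarchimedean normed field which is a normed ℚ_p-algebra. Let W be a finite-dimensional L-vector space equipped with a nonarchimedean norm compatible with that of L, and let N : W → W be an L-linear map. Let m ≥ 1 and let ξ_1, …, ξ_{n₀} ∈ ℤ_p be such that ∏_{k=1}^{n₀}(N − ξ_k)^m = 0 on W, every difference ξ_k − ξ_{k'} is p-adically non-Liouville, and every difference is either 0 or not a rational integer. Let Q ∈ ℚ_p[x] be a polynomial with Q(N)(W) contained in the kernel of N − ξ_1. Let 0 < d < b ≤ c < e < 1 be real numbers and let (v_j)_{j∈ℤ} be a family in W with sup_{j∈ℤ} ‖v_j‖·max(d^j, e^j) < ∞. For j ∈ ℤ and l ∈ ℕ set D_l^{(j)} := Q(N + j) ∘ ∏_{k=1}^{n₀} ∏_{i=1}^{l} [ ((i − (ξ_1 − ξ_k))·(i + (ξ_1 − ξ_k)))^{−1} · (i − (N + j − ξ_k)) ∘ (i + (N + j − ξ_k)) ]^m.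 Then D_l^{(0)}(v_0) = Q(N)(v_0) for every l, and lim_{l→∞} sup_{j∈ℤ, j≠0} ‖D_l^{(j)}(v_j)‖·max(b^j, c^j) = 0. -/
open Polynomial

/-- The polynomial over `L` whose evaluation at `N` is the operator
`D_l^{(j)} = Q(N + j) ∘ ∏_{k=1}^{n₀} ∏_{i=1}^{l}
[((i - (ξ_1 - ξ_k))(i + (ξ_1 - ξ_k)))⁻¹ (i - (N + j - ξ_k))(i + (N + j - ξ_k))]^m`
(with `ξ_1 = ξ 0`, and `ℤ_p`-scalars acting through `ℚ_p → L`), from the proof of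
Lemma 3.4.1. -/
noncomputable def DjlPolyL (p : ℕ) [Fact p.Prime] (L : Type*) [Field L]
    [Algebra ℚ_[p] L] (n₀ : ℕ) (hn₀ : 0 < n₀) (ξ : Fin n₀ → ℤ_[p]) (m : ℕ)
    (Q : Polynomial ℚ_[p]) (j : ℤ) (l : ℕ) : Polynomial L :=
  (Q.map (algebraMap ℚ_[p] L)).comp (Polynomial.X + Polynomial.C (j : L)) *
    ∏ k : Fin n₀, ∏ i ∈ Finset.Icc 1 l,
      (Polynomial.C ((((i : L) - algebraMap ℚ_[p] L ((ξ ⟨0, hn₀⟩ : ℚ_[p]) - (ξ k : ℚ_[p]))) *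
            ((i : L) + algebraMap ℚ_[p] L ((ξ ⟨0, hn₀⟩ : ℚ_[p]) - (ξ k : ℚ_[p]))))⁻¹) *
        ((Polynomial.C (i : L) -
            (Polynomial.X + Polynomial.C ((j : L) - algebraMap ℚ_[p] L (ξ k : ℚ_[p])))) *
          (Polynomial.C (i : L) +
            (Polynomial.X + Polynomial.C ((j : L) - algebraMap ℚ_[p] L (ξ k : ℚ_[p])))))) ^ m


lemma aux_factorial_choose {R : Type*} [CommRing R] [BinomialRing R] (r : R) (n : ℕ) :
    (n.factorial : R) * Ring.choose r n = ∏ i ∈ Finset.range n, (r - (i : R)) := by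
  rw [← nsmul_eq_mul, ← Ring.descPochhammer_eq_factorial_smul_choose,
    ← descPochhammer_eval_eq_prod_range, ← Polynomial.aeval_eq_smeval, Polynomial.aeval_def,
    Polynomial.eval₂_eq_eval_map, algebraMap_int_eq, descPochhammer_map]

lemma aux_succ_choose {R : Type*} [CommRing R] [BinomialRing R] (r : R) (n : ℕ) :
    ((n : R) + 1) * Ring.choose r (n + 1) = r * Ring.choose (r - 1) n := by
  have := Ring.choose_smul_choose r (n := n + 1) (k := 1) (by omega)
  simpa using this

lemma aux_prod_sub {R : Type*} [CommRing R] [BinomialRing R] (y : R) (n : ℕ) :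
    ∏ i ∈ Finset.Icc 1 n, ((i : R) - y) =
      (-1) ^ n * ((n.factorial : R) * Ring.choose (y - 1) n) := by
  have h1 : (-1 : R) ^ n = ∏ i ∈ Finset.range n, (-1 : R) := by simp
  rw [aux_factorial_choose, h1, ← Finset.prod_mul_distrib]
  rw [← Finset.Ico_add_one_right_eq_Icc, Finset.prod_Ico_eq_prod_range]
  refine Finset.prod_congr rfl fun x _ => ?_
  push_cast; ring

lemma aux_prod_add {R : Type*} [CommRing R] [BinomialRing R] (y : R) (n : ℕ) :
    ∏ i ∈ Finset.Icc 1 n, ((i : R) + y) =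
      (n.factorial : R) * Ring.choose (y + n) n := by
  rw [aux_factorial_choose, ← Finset.prod_range_reflect]
  rw [← Finset.Ico_add_one_right_eq_Icc, Finset.prod_Ico_eq_prod_range]
  refine Finset.prod_congr rfl fun x hx => ?_
  have hx := Finset.mem_range.1 hx
  have : ((n - 1 - x : ℕ) : R) + 1 + x = n := by
    have : n - 1 - x + 1 + x = n := by omega
    exact_mod_cast congrArg (Nat.cast (R := R)) this
  push_cast
  linear_combination this

lemma aux_norm_nat (p : ℕ) [Fact p.Prime] (n : ℕ) :
    1 ≤ ((n : ℝ) + 1) * ‖((n : ℚ_[p]) + 1)‖ := by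
  have h0 : ((n + 1 : ℕ) : ℚ_[p]) ≠ 0 := by exact_mod_cast Nat.succ_ne_zero n
  have h1 := Padic.norm_eq_zpow_neg_valuation h0
  rw [Padic.valuation_natCast, Nat.cast_succ] at h1
  rw [h1]
  have hp : 0 < p := (Fact.out : p.Prime).pos
  have h2 : p ^ padicValNat p (n+1) ≤ n + 1 := Nat.le_of_dvd (by omega) pow_padicValNat_dvd
  have h3 : (p:ℝ) ^ padicValNat p (n+1) ≤ n + 1 := by exact_mod_cast h2
  rw [zpow_neg, zpow_natCast, ← div_eq_mul_inv, le_div_iff₀ (by positivity)]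
  simpa using h3

lemma aux_norm_prod (p : ℕ) [Fact p.Prime] (a : ℚ_[p]) (l : ℕ) (K : ℝ) (hK : 1 ≤ K)
    (h : ∀ i ∈ Finset.Icc 1 l, (i : ℚ_[p]) - a ≠ 0 ∧ ‖(i : ℚ_[p]) - a‖⁻¹ ≤ K) :
    ‖((l.factorial : ℕ) : ℚ_[p])‖ ≤ K * ‖∏ i ∈ Finset.Icc 1 l, ((i : ℚ_[p]) - a)‖ := by
  rcases Nat.eq_zero_or_pos l with rfl | hl
  · simpa using hK
  obtain ⟨i0, hi0, hmin⟩ := Finset.exists_min_image (Finset.Icc 1 l)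
    (fun i : ℕ => ‖(i : ℚ_[p]) - a‖) ⟨1, by simp; omega⟩
  rw [← Finset.mul_prod_erase _ _ hi0, norm_mul, norm_prod]
  have hpos : 0 < ‖(i0 : ℚ_[p]) - a‖ := norm_pos_iff.2 (h i0 hi0).1
  have h1 : 1 ≤ K * ‖(i0 : ℚ_[p]) - a‖ := by
    have := (h i0 hi0).2
    rwa [inv_le_iff_one_le_mul₀ hpos] at this
  have h2 : ∏ i ∈ (Finset.Icc 1 l).erase i0, ‖(i : ℚ_[p]) - (i0 : ℚ_[p])‖ ≤
      ∏ i ∈ (Finset.Icc 1 l).erase i0, ‖(i : ℚ_[p]) - a‖ := by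
    apply Finset.prod_le_prod
    · intros; positivity
    · intro i hi
      have hm := hmin i (Finset.mem_of_mem_erase hi)
      have : (i : ℚ_[p]) - i0 = (i - a) - (i0 - a) := by ring
      rw [this]
      rw [sub_eq_add_neg]
      refine (IsUltrametricDist.norm_add_le_max _ _).trans ?_
      rw [norm_neg]
      simp [hm]
  have h3 : ‖((l.factorial : ℕ) : ℚ_[p])‖ ≤
      ∏ i ∈ (Finset.Icc 1 l).erase i0, ‖(i : ℚ_[p]) - (i0 : ℚ_[p])‖ := by
    simp only [Finset.mem_Icc] at hi0
    have e1 : (Finset.Icc 1 l).erase i0 = Finset.Ico 1 i0 ∪ Finset.Ico (i0+1) (l+1) := by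
      ext x; simp; omega
    have e2 : ∏ i ∈ (Finset.Icc 1 l).erase i0, ‖(i : ℚ_[p]) - (i0 : ℚ_[p])‖ =
        ‖(((i0-1).factorial * (l-i0).factorial : ℕ) : ℚ_[p])‖ := by
      rw [e1, Finset.prod_union]
      · push_cast
        rw [norm_mul]
        congr 1
        · obtain ⟨q, rfl⟩ : ∃ q, i0 = q + 1 := ⟨i0 - 1, by omega⟩
          rw [Finset.prod_Ico_eq_prod_range, ← Finset.prod_range_add_one_eq_factorial,
            ← Finset.prod_range_reflect]
          simp only [Nat.add_sub_cancel]
          push_cast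
          rw [norm_prod]
          refine Finset.prod_congr rfl fun x hx => ?_
          have hx := Finset.mem_range.1 hx
          have : ((q - 1 - x : ℕ) : ℚ_[p]) + 1 + x = q := by
            have : q - 1 - x + 1 + x = q := by omega
            exact_mod_cast congrArg (Nat.cast (R := ℚ_[p])) this
          rw [← norm_neg]
          congr 1
          linear_combination -this
        · rw [Finset.prod_Ico_eq_prod_range, ← Finset.prod_range_add_one_eq_factorial]
          push_cast
          rw [norm_prod]

          refine Finset.prod_congr rfl fun x _ => ?_
          congr 1; ring
      · rw [Finset.disjoint_left]; intro x; simp; omega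
    rw [e2]
    have hdvd : ((i0-1).factorial * (l-i0).factorial) ∣ l.factorial := by
      have := Nat.factorial_mul_factorial_dvd_factorial_add (i0-1) (l-i0)
      exact this.trans (Nat.factorial_dvd_factorial (by omega))
    obtain ⟨t, ht⟩ := hdvd
    rw [ht, Nat.cast_mul, norm_mul]
    exact mul_le_of_le_one_right (norm_nonneg _) (IsUltrametricDist.norm_natCast_le_one _ t)
  calc _ ≤ _ := h3.trans h2
    _ ≤ (K * ‖(i0 : ℚ_[p]) - a‖) * ∏ i ∈ (Finset.Icc 1 l).erase i0, ‖(i : ℚ_[p]) - a‖ :=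
        le_mul_of_one_le_left (Finset.prod_nonneg fun _ _ => norm_nonneg _) h1
    _ = _ := by ring

section PBsec

variable {L : Type*} [NormedField L] {W : Type*} [NormedAddCommGroup W] [NormedSpace L W]

/-- boundedness of a polynomial in `N` -/
def PB (N : Module.End L W) (f : Polynomial L) (K : ℝ) : Prop :=
  0 ≤ K ∧ ∀ w : W, ‖Polynomial.aeval N f w‖ ≤ K * ‖w‖

lemma PB.mul {N : Module.End L W} {f g : Polynomial L} {K K' : ℝ} (hf : PB N f K)
    (hg : PB N g K') : PB N (f * g) (K * K') := by
  refine ⟨mul_nonneg hf.1 hg.1, fun w => ?_⟩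
  rw [map_mul, Module.End.mul_apply]
  refine (hf.2 _).trans ?_
  rw [mul_assoc]
  exact mul_le_mul_of_nonneg_left (hg.2 w) hf.1

lemma PB.const (N : Module.End L W) (a : L) : PB N (Polynomial.C a) ‖a‖ := by
  refine ⟨norm_nonneg _, fun w => ?_⟩
  simp [norm_smul]

lemma PB.one (N : Module.End L W) : PB N 1 1 := by
  refine ⟨zero_le_one, fun w => ?_⟩
  simp

lemma PB.mono {N : Module.End L W} {f : Polynomial L} {K K' : ℝ} (hf : PB N f K)
    (h : K ≤ K') : PB N f K' :=
  ⟨hf.1.trans h, fun w => (hf.2 w).trans (mul_le_mul_of_nonneg_right h (norm_nonneg _))⟩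

lemma PB.add {N : Module.End L W} {f g : Polynomial L} {K K' : ℝ} (hf : PB N f K)
    (hg : PB N g K') : PB N (f + g) (K + K') := by
  refine ⟨add_nonneg hf.1 hg.1, fun w => ?_⟩
  rw [map_add, LinearMap.add_apply, add_mul]
  exact (norm_add_le _ _).trans (add_le_add (hf.2 w) (hg.2 w))

lemma PB.pow {N : Module.End L W} {f : Polynomial L} {K : ℝ} (hf : PB N f K) (n : ℕ) :
    PB N (f ^ n) (K ^ n) := by
  induction n with
  | zero => simpa using PB.one N
  | succ n ih => rw [pow_succ, pow_succ]; exact ih.mul hf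

lemma PB.prod {ι : Type*} {N : Module.End L W} {f : ι → Polynomial L} {K : ι → ℝ}
    (s : Finset ι) (hf : ∀ i ∈ s, PB N (f i) (K i)) :
    PB N (∏ i ∈ s, f i) (∏ i ∈ s, K i) := by
  classical
  induction s using Finset.induction_on with
  | empty => simpa using PB.one N
  | insert a s ha ih =>
    rw [Finset.prod_insert ha, Finset.prod_insert ha]
    exact (hf a (by simp)).mul (ih fun i hi => hf i (by simp [hi]))

lemma PB.comp_shift [IsUltrametricDist L] {N : Module.End L W} {K : ℝ}
    (hN : PB N Polynomial.X K) (Q : Polynomial L) :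
    ∃ M : ℝ, ∀ j : ℤ, PB N (Q.comp (Polynomial.X + Polynomial.C (j : L))) M := by
  induction Q using Polynomial.induction_on' with
  | add f g hf hg =>
    obtain ⟨M, hM⟩ := hf
    obtain ⟨M', hM'⟩ := hg
    refine ⟨M + M', fun j => ?_⟩
    rw [Polynomial.add_comp]
    exact (hM j).add (hM' j)
  | monomial n a =>
    refine ⟨‖a‖ * (K + 1) ^ n, fun j => ?_⟩
    rw [Polynomial.monomial_comp]
    refine (PB.const N a).mul (PB.pow (hN.add ?_) n)
    exact (PB.const N (j : L)).mono (IsUltrametricDist.norm_intCast_le_one L j)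

end PBsec

/-- the ring hom `ℤ_p → L` -/
noncomputable def phiL (p : ℕ) [Fact p.Prime] (L : Type*) [Field L] [Algebra ℚ_[p] L] :
    ℤ_[p] →+* L := (algebraMap ℚ_[p] L).comp PadicInt.Coe.ringHom

lemma phiL_norm_le (p : ℕ) [Fact p.Prime] (L : Type*) [NormedField L] [NormedAlgebra ℚ_[p] L]
    (a : ℤ_[p]) : ‖phiL p L a‖ ≤ 1 := by
  have : phiL p L a = algebraMap ℚ_[p] L (a : ℚ_[p]) := rfl
  rw [this, norm_algebraMap']
  exact a.2

lemma growth (p : ℕ) [Fact p.Prime] {L : Type*} [NormedField L] [CharZero L]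
    [NormedAlgebra ℚ_[p] L]
    {W : Type*} [NormedAddCommGroup W] [NormedSpace L W] [IsUltrametricDist W]
    {N : Module.End L W} {K : ℝ} (hN : PB N Polynomial.X K) (T : List ℤ_[p]) :
    ∃ B : ℝ, 0 ≤ B ∧ ∀ (a : ℤ_[p]) (s : ℕ) (w : W),
      Polynomial.aeval N (T.map (fun ξ => Polynomial.X - Polynomial.C (phiL p L ξ))).prod w = 0 →
      ‖Polynomial.aeval N (Ring.choose (Polynomial.X + Polynomial.C (phiL p L a)) s) w‖ ≤
        B * ((s : ℝ) + 1) ^ T.length * ‖w‖ := by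
  induction T with
  | nil =>
    refine ⟨0, le_rfl, fun a s w hw => ?_⟩
    have : w = 0 := by simpa using hw
    simp [this]
  | cons ξ T ih =>
    obtain ⟨B, hB, ih⟩ := ih
    have hK := hN.1
    refine ⟨1 + B * (K + 1), by positivity, fun a s w hw => ?_⟩
    set x : Polynomial L := Polynomial.X - Polynomial.C (phiL p L ξ) with hx
    have e1 : Polynomial.X + Polynomial.C (phiL p L a) =
        x + Polynomial.C (phiL p L (ξ + a)) := by
      rw [hx, map_add, map_add]; ring
    have hxb : PB N x (K + 1) := by
      have : x = Polynomial.X + Polynomial.C (-phiL p L ξ) := by rw [hx, map_neg]; ring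
      rw [this]
      refine hN.add ((PB.const N _).mono ?_)
      rw [norm_neg]; exact phiL_norm_le p L ξ
    rw [e1, Ring.add_choose_eq s (Commute.all _ _), map_sum, LinearMap.sum_apply]
    refine IsUltrametricDist.norm_sum_le_of_forall_le_of_nonneg (by positivity) ?_
    rintro ⟨u, t⟩ hut
    rw [Finset.HasAntidiagonal.mem_antidiagonal] at hut
    simp only at hut ⊢
    have e2 : Ring.choose (Polynomial.C (phiL p L (ξ + a))) t =
        Polynomial.C (phiL p L (Ring.choose (ξ + a) t)) := by
      rw [Ring.map_choose, Ring.map_choose]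
    rw [e2, mul_comm, map_mul, Module.End.mul_apply]
    refine ((PB.const N _).2 _).trans ?_
    refine (mul_le_of_le_one_left (norm_nonneg _) (phiL_norm_le p L _)).trans ?_
    have hs1 : (1:ℝ) ≤ ((s : ℝ) + 1) ^ (ξ :: T).length := one_le_pow₀ (by linarith [s.cast_nonneg (α := ℝ)])
    cases u with
    | zero =>
      rw [Ring.choose_zero_right, map_one, Module.End.one_apply]
      refine le_mul_of_one_le_left (norm_nonneg _) ?_
      refine one_le_mul_of_one_le_of_one_le ?_ hs1
      have : 0 ≤ B * (K + 1) := by positivity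
      linarith
    | succ u =>
      have e3 := aux_succ_choose x u
      have e4 : x - 1 = Polynomial.X + Polynomial.C (phiL p L (-ξ - 1)) := by
        rw [hx]; simp only [map_sub, map_neg, map_one]; ring
      have hw' : Polynomial.aeval N
          (T.map (fun ξ => Polynomial.X - Polynomial.C (phiL p L ξ))).prod
          (Polynomial.aeval N x w) = 0 := by
        rw [← Module.End.mul_apply, ← map_mul, mul_comm]
        rw [List.map_cons, List.prod_cons] at hw
        exact hw
      have h5 := ih (-ξ - 1) u _ hw'
      rw [← e4, ← Module.End.mul_apply, ← map_mul, mul_comm, ← e3] at h5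
      have e6 : ((u : Polynomial L) + 1) = Polynomial.C ((u : L) + 1) := by simp
      rw [e6, map_mul, Module.End.mul_apply, Polynomial.aeval_C, Module.algebraMap_end_apply,
        norm_smul] at h5
      have e7 : ‖((u : L) + 1)‖ = ‖((u : ℚ_[p]) + 1)‖ := by
        rw [← norm_algebraMap' L ((u : ℚ_[p]) + 1)]; simp
      rw [e7] at h5
      have h8 := aux_norm_nat p u
      have h9 := hxb.2 w
      have hus : ((u:ℝ) + 1) ≤ (s:ℝ) + 1 := by
        have : (u:ℝ) ≤ s := by exact_mod_cast (by omega : u ≤ s)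
        linarith
      set Z := ‖Polynomial.aeval N (Ring.choose x (u + 1)) w‖ with hZ
      calc Z ≤ (((u : ℝ) + 1) * ‖((u : ℚ_[p]) + 1)‖) * Z :=
            le_mul_of_one_le_left (norm_nonneg _) h8
        _ = ((u : ℝ) + 1) * (‖((u : ℚ_[p]) + 1)‖ * Z) := by ring
        _ ≤ ((u : ℝ) + 1) * (B * ((u : ℝ) + 1) ^ T.length * ((K + 1) * ‖w‖)) := by
            refine mul_le_mul_of_nonneg_left (h5.trans ?_) (by positivity)
            exact mul_le_mul_of_nonneg_left h9 (by positivity)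
        _ = (B * (K + 1)) * ((u : ℝ) + 1) ^ (T.length + 1) * ‖w‖ := by ring
        _ ≤ (1 + B * (K + 1)) * ((s : ℝ) + 1) ^ (ξ :: T).length * ‖w‖ := by
            rw [List.length_cons]
            gcongr
            linarith

lemma factor_bound (p : ℕ) [Fact p.Prime] {L : Type*} [NormedField L] [CharZero L]
    [NormedAlgebra ℚ_[p] L]
    {W : Type*} [NormedAddCommGroup W] [NormedSpace L W]
    {N : Module.End L W} {G K : ℝ} (l : ℕ) (hG : ∀ a : ℤ_[p],
      PB N (Ring.choose (Polynomial.X + Polynomial.C (phiL p L a)) l) G)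
    (a : ℚ_[p]) (z : ℤ_[p]) (zL : L) (hz : zL = phiL p L z) (hK : 1 ≤ K)
    (h1 : ∀ i ∈ Finset.Icc 1 l, (i : ℚ_[p]) - a ≠ 0 ∧ ‖(i : ℚ_[p]) - a‖⁻¹ ≤ K)
    (h2 : ∀ i ∈ Finset.Icc 1 l, (i : ℚ_[p]) + a ≠ 0 ∧ ‖(i : ℚ_[p]) + a‖⁻¹ ≤ K) :
    PB N (∏ i ∈ Finset.Icc 1 l,
      (Polynomial.C ((((i : L) - algebraMap ℚ_[p] L a) *
            ((i : L) + algebraMap ℚ_[p] L a))⁻¹) *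
        ((Polynomial.C (i : L) -
            (Polynomial.X + Polynomial.C zL)) *
          (Polynomial.C (i : L) +
            (Polynomial.X + Polynomial.C zL))))) ((K * K) * (G * G)) := by
  subst hz
  have b1 := aux_norm_prod p a l K hK h1
  have b2 := aux_norm_prod p (-a) l K hK (by simpa using h2)
  simp only [sub_neg_eq_add] at b2
  have p1 : ∏ i ∈ Finset.Icc 1 l, ((i : ℚ_[p]) - a) ≠ 0 :=
    Finset.prod_ne_zero_iff.2 fun i hi => (h1 i hi).1
  have p2 : ∏ i ∈ Finset.Icc 1 l, ((i : ℚ_[p]) + a) ≠ 0 :=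
    Finset.prod_ne_zero_iff.2 fun i hi => (h2 i hi).1
  set P1 := ∏ i ∈ Finset.Icc 1 l, ((i : ℚ_[p]) - a)
  set P2 := ∏ i ∈ Finset.Icc 1 l, ((i : ℚ_[p]) + a)
  have key : (∏ i ∈ Finset.Icc 1 l,
      (Polynomial.C ((((i : L) - algebraMap ℚ_[p] L a) *
            ((i : L) + algebraMap ℚ_[p] L a))⁻¹) *
        ((Polynomial.C (i : L) -
            (Polynomial.X + Polynomial.C (phiL p L z))) *
          (Polynomial.C (i : L) +
            (Polynomial.X + Polynomial.C (phiL p L z)))))) =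
      Polynomial.C (algebraMap ℚ_[p] L
        ((-1) ^ l * ((l.factorial * P1⁻¹) * (l.factorial * P2⁻¹)))) *
      (Ring.choose (Polynomial.X + Polynomial.C (phiL p L (z - 1))) l *
       Ring.choose (Polynomial.X + Polynomial.C (phiL p L (z + l))) l) := by
    rw [Finset.prod_mul_distrib, Finset.prod_mul_distrib]
    simp only [Polynomial.C_eq_natCast]
    rw [aux_prod_sub, aux_prod_add, ← map_prod, Finset.prod_inv_distrib, Finset.prod_mul_distrib]
    have q1 : ∏ i ∈ Finset.Icc 1 l, ((i : L) - algebraMap ℚ_[p] L a) = algebraMap ℚ_[p] L P1 := by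
      simp [P1, map_prod]
    have q2 : ∏ i ∈ Finset.Icc 1 l, ((i : L) + algebraMap ℚ_[p] L a) = algebraMap ℚ_[p] L P2 := by
      simp [P2, map_prod]
    rw [q1, q2]
    have r1 : Polynomial.X + Polynomial.C (phiL p L z) - 1 =
      Polynomial.X + Polynomial.C (phiL p L (z - 1)) := by simp; ring
    have r2 : Polynomial.X + Polynomial.C (phiL p L z) + (l : Polynomial L) =
      Polynomial.X + Polynomial.C (phiL p L (z + l)) := by simp; ring
    rw [r1, r2]
    simp only [map_mul, map_pow, map_neg, map_one, mul_inv, map_inv₀, map_natCast]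
    ring
  rw [key]
  refine PB.mul ((PB.const N _).mono ?_) ((hG _).mul (hG _))
  rw [norm_algebraMap']
  simp only [norm_mul, norm_pow, norm_neg, norm_one, one_pow, one_mul, norm_inv]
  have n1 : 0 < ‖P1‖ := norm_pos_iff.2 p1
  have n2 : 0 < ‖P2‖ := norm_pos_iff.2 p2
  have c1 : ‖(l.factorial : ℚ_[p])‖ * ‖P1‖⁻¹ ≤ K := by
    rw [← div_eq_mul_inv, div_le_iff₀ n1]; exact b1
  have c2 : ‖(l.factorial : ℚ_[p])‖ * ‖P2‖⁻¹ ≤ K := by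
    rw [← div_eq_mul_inv, div_le_iff₀ n2]; exact b2
  exact mul_le_mul c1 c2 (by positivity) (by linarith)

lemma aux_subexp (B : ℝ) (hB : 0 ≤ B) (M : ℕ) (δ : ℝ) (hδ : 1 < δ) :
    ∃ B' : ℝ, 0 ≤ B' ∧ ∀ s : ℕ, B * ((s : ℝ) + 1) ^ M ≤ B' * δ ^ s := by
  have h := tendsto_pow_const_mul_const_pow_of_abs_lt_one M (r := δ⁻¹)
    (by rw [abs_of_pos (by positivity)]; exact inv_lt_one_of_one_lt₀ hδ)
  obtain ⟨A, hA⟩ := h.bddAbove_range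
  have hA' : ∀ n : ℕ, (n : ℝ) ^ M * δ⁻¹ ^ n ≤ A := fun n => hA ⟨n, rfl⟩
  have hA0 : 0 ≤ A := le_trans (by positivity) (hA' 0)
  have hδ0 : 0 < δ := by linarith
  refine ⟨B * (A * δ), by positivity, fun s => ?_⟩
  have := hA' (s + 1)
  rw [inv_pow, ← div_eq_mul_inv, div_le_iff₀ (by positivity), pow_succ] at this
  push_cast at this
  calc B * ((s : ℝ) + 1) ^ M ≤ B * (A * (δ ^ s * δ)) := by gcongr
    _ = _ := by ring

lemma aux_delta (r : ℝ) (hr : r < 1) (E : ℕ) : ∃ δ : ℝ, 1 < δ ∧ δ ^ E * r < 1 := by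
  have hc : Continuous fun x : ℝ => x ^ E * r := by fun_prop
  have h1 : ∀ᶠ x in nhds (1:ℝ), x ^ E * r < 1 :=
    (hc.tendsto' 1 r (by simp)).eventually (gt_mem_nhds hr)
  have h2 : ∀ᶠ x in nhdsWithin (1:ℝ) (Set.Ioi 1), x ^ E * r < 1 :=
    h1.filter_mono nhdsWithin_le_nhds
  obtain ⟨x, hx, hx'⟩ := (h2.and self_mem_nhdsWithin).exists
  exact ⟨x, hx', hx⟩

lemma aux_weight (d b c e : ℝ) (hd : 0 < d) (hdb : d < b) (hbc : b ≤ c) (hce : c < e) (j : ℤ) :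
    max (b ^ j) (c ^ j) ≤ (max (c / e) (d / b)) ^ j.natAbs * max (d ^ j) (e ^ j) := by
  have hb : 0 < b := hd.trans hdb
  have hc : 0 < c := hb.trans_le hbc
  have he : 0 < e := hc.trans hce
  obtain ⟨n, rfl | rfl⟩ := Int.eq_nat_or_neg j
  · simp only [zpow_natCast, Int.natAbs_natCast]
    have : b ^ n ≤ c ^ n := by gcongr
    rw [max_eq_right this]
    calc c ^ n = (c / e) ^ n * e ^ n := by rw [← mul_pow]; congr 1; field_simp
      _ ≤ _ := by
        gcongr
        · exact le_max_left _ _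
        · exact le_max_right _ _
  · simp only [zpow_neg, zpow_natCast, Int.natAbs_neg, Int.natAbs_natCast]
    have : (c ^ n)⁻¹ ≤ (b ^ n)⁻¹ := by gcongr
    rw [max_eq_left this]
    calc (b ^ n)⁻¹ = (d / b) ^ n * (d ^ n)⁻¹ := by rw [div_pow]; field_simp
      _ ≤ _ := by
        gcongr
        · exact le_max_right _ _
        · exact le_max_left _ _

lemma aux_nl (p : ℕ) [Fact p.Prime] (x : ℤ_[p]) (hNL : IsPAdicNonLiouville x)
    (hNI : x = 0 ∨ ∀ i : ℤ, (x : ℚ_[p]) ≠ (i : ℚ_[p])) (δ : ℝ) (hδ : 1 < δ) :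
    ∃ C : ℝ, ∀ l : ℕ, ∀ i ∈ Finset.Icc 1 l,
      (x : ℚ_[p]) + (i : ℚ_[p]) ≠ 0 ∧ ‖(x : ℚ_[p]) + (i : ℚ_[p])‖⁻¹ ≤ C * δ ^ l := by
  obtain ⟨C, hC, h⟩ := hNL δ hδ
  refine ⟨C, fun l i hi => ?_⟩
  rw [Finset.mem_Icc] at hi
  have hne : (x : ℚ_[p]) + (i : ℚ_[p]) ≠ 0 := by
    rcases hNI with rfl | hx
    · simp; omega
    · intro h0
      apply hx (-(i : ℤ))
      push_cast
      linear_combination h0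
  refine ⟨hne, ?_⟩
  have := h i (by simpa using hne)
  simp only [Int.cast_natCast, Int.natAbs_natCast] at this
  refine this.trans ?_
  gcongr
  · exact hδ.le
  · exact hi.2

lemma aux_list (p : ℕ) [Fact p.Prime] (L : Type*) [Field L] [Algebra ℚ_[p] L] {ι : Type*}
    (ξ : ι → ℤ_[p]) (m : ℕ) (s : Finset ι) : ∃ T : List ℤ_[p],
      (T.map (fun ξ => Polynomial.X - Polynomial.C (phiL p L ξ))).prod =
      ∏ k ∈ s, (Polynomial.X - Polynomial.C (algebraMap ℚ_[p] L (ξ k : ℚ_[p]))) ^ m := by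
  classical
  induction s using Finset.induction_on with
  | empty => exact ⟨[], by simp⟩
  | insert a s ha ih =>
    obtain ⟨T, hT⟩ := ih
    refine ⟨List.replicate m (ξ a) ++ T, ?_⟩
    rw [Finset.prod_insert ha, List.map_append, List.prod_append, hT]
    rw [List.map_replicate, List.prod_replicate]
    rfl

lemma aux_dvd (p : ℕ) [Fact p.Prime] (L : Type*) [Field L]
    [Algebra ℚ_[p] L] (n₀ : ℕ) (hn₀ : 0 < n₀) (ξ : Fin n₀ → ℤ_[p]) (m : ℕ)
    (Q : Polynomial ℚ_[p]) (j : ℤ) (l : ℕ) (hj : j ≠ 0) (hl : j.natAbs ≤ l) :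
    (∏ k : Fin n₀,
        (Polynomial.X - Polynomial.C (algebraMap ℚ_[p] L (ξ k : ℚ_[p]))) ^ m) ∣
      DjlPolyL p L n₀ hn₀ ξ m Q j l := by
  unfold DjlPolyL
  refine Dvd.dvd.mul_left (Finset.prod_dvd_prod_of_dvd _ _ fun k _ => ?_) _
  have hmem : j.natAbs ∈ Finset.Icc 1 l := by rw [Finset.mem_Icc]; omega
  refine Dvd.dvd.trans ?_ (Finset.dvd_prod_of_mem _ hmem)
  refine pow_dvd_pow_of_dvd (Dvd.dvd.mul_left ?_ _) m
  rcases Int.natAbs_eq j with h | h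
  · refine Dvd.dvd.mul_right ?_ _
    have : (j : L) = (j.natAbs : L) := by rw [h]; simp
    rw [this]
    refine ⟨-1, ?_⟩
    simp only [map_sub]; ring
  · refine Dvd.dvd.mul_left ?_ _
    have : (j : L) = -(j.natAbs : L) := by rw [h]; simp
    rw [this]
    refine ⟨1, ?_⟩
    simp only [map_sub, map_neg]; ring

lemma aux_eig {L : Type*} [Field L] {W : Type*} [AddCommGroup W] [Module L W]
    (N : Module.End L W) (x : L) (w : W) (h : N w = x • w) (f : Polynomial L) :
    Polynomial.aeval N f w = f.eval x • w := by
  induction f using Polynomial.induction_on' with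
  | add f g hf hg => simp [hf, hg, add_smul]
  | monomial n a =>
    rw [Polynomial.aeval_monomial, Polynomial.eval_monomial, Module.End.mul_apply,
      Module.algebraMap_end_apply, mul_smul]
    congr 1
    induction n with
    | zero => simp
    | succ n ih => rw [pow_succ, Module.End.mul_apply, h, map_smul, ih, smul_smul, pow_succ, mul_comm]

lemma aux_bdd0 {L : Type*} [NontriviallyNormedField L] [CompleteSpace L] {W : Type*}
    [NormedAddCommGroup W] [NormedSpace L W] [FiniteDimensional L W] (N : Module.End L W) :
    ∃ K, PB N Polynomial.X K := by
  let N' : W →L[L] W := LinearMap.toContinuousLinearMap N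
  refine ⟨‖N'‖, norm_nonneg _, fun w => ?_⟩
  rw [Polynomial.aeval_X]
  exact N'.le_opNorm w

lemma aux_bdd {L : Type*} [NormedField L] [CompleteSpace L] (h : ∃ x : L, 1 < ‖x‖) {W : Type*}
    [NormedAddCommGroup W] [NormedSpace L W] [FiniteDimensional L W] (N : Module.End L W) :
    ∃ K, PB N Polynomial.X K := by
  letI : NontriviallyNormedField L := { ‹NormedField L› with non_trivial := h }
  exact aux_bdd0 N

/-- **Analytic content of claims 1 and 2 in the proof of Lemma 3.4.1 (one variable).**
Over a complete nonarchimedean normed `ℚ_p`-algebra field `L`, let `W` be a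
finite-dimensional nonarchimedean normed `L`-vector space and `N` an endomorphism with
`∏_k (N - ξ_k)^m = 0`, the differences `ξ_k - ξ_{k'} ∈ ℤ_p` being `p`-adically
non-Liouville and either `0` or not rational integers.  Let `Q ∈ ℚ_p[x]` with
`Q(N)(W) ⊆ ker (N - ξ_1)`, let `0 < d < b ≤ c < e < 1`, and let `(v_j)_{j∈ℤ}` satisfy
`sup_j ‖v_j‖ max(d^j, e^j) < ∞`.  Then `D_l^{(0)}(v_0) = Q(N)(v_0)` for every `l`, and
`sup_{j≠0} ‖D_l^{(j)}(v_j)‖ max(b^j, c^j) → 0` as `l → ∞`. -/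
theorem stmt13 (p : ℕ) [Fact p.Prime] (L : Type*) [NormedField L] [CompleteSpace L]
    [IsUltrametricDist L] [NormedAlgebra ℚ_[p] L]
    (W : Type*) [NormedAddCommGroup W] [NormedSpace L W] [IsUltrametricDist W]
    [FiniteDimensional L W]
    (N : Module.End L W)
    (m : ℕ) (hm : 1 ≤ m) (n₀ : ℕ) (hn₀ : 0 < n₀) (ξ : Fin n₀ → ℤ_[p])
    (hann : Polynomial.aeval N
      (∏ k : Fin n₀,
        (Polynomial.X - Polynomial.C (algebraMap ℚ_[p] L (ξ k : ℚ_[p]))) ^ m) = 0)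
    (hNL : ∀ k k' : Fin n₀, IsPAdicNonLiouville (ξ k - ξ k'))
    (hNI : ∀ k k' : Fin n₀, ξ k - ξ k' = 0 ∨
      ∀ i : ℤ, ((ξ k - ξ k' : ℤ_[p]) : ℚ_[p]) ≠ (i : ℚ_[p]))
    (Q : Polynomial ℚ_[p])
    (hQ : ∀ w : W,
      N (Polynomial.aeval N (Q.map (algebraMap ℚ_[p] L)) w) =
        algebraMap ℚ_[p] L (ξ ⟨0, hn₀⟩ : ℚ_[p]) •
          (Polynomial.aeval N (Q.map (algebraMap ℚ_[p] L)) w))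
    (d b c e : ℝ) (hd : 0 < d) (hdb : d < b) (hbc : b ≤ c) (hce : c < e) (he : e < 1)
    (v : ℤ → W)
    (hv : ∃ B : ℝ, ∀ j : ℤ, ‖v j‖ * max (d ^ j) (e ^ j) ≤ B) :
    (∀ l : ℕ,
      Polynomial.aeval N (DjlPolyL p L n₀ hn₀ ξ m Q 0 l) (v 0) =
        Polynomial.aeval N (Q.map (algebraMap ℚ_[p] L)) (v 0)) ∧
    (∀ ε : ℝ, 0 < ε → ∃ L₀ : ℕ, ∀ l : ℕ, L₀ ≤ l → ∀ j : ℤ, j ≠ 0 →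
      ‖Polynomial.aeval N (DjlPolyL p L n₀ hn₀ ξ m Q j l) (v j)‖ * max (b ^ j) (c ^ j)
        ≤ ε) := by
  have hinj : Function.Injective (algebraMap ℚ_[p] L) := (algebraMap ℚ_[p] L).injective
  have : CharZero L := charZero_of_injective_algebraMap hinj
  have hnl : ∀ δ : ℝ, 1 < δ → ∀ k k' : Fin n₀, ∃ C : ℝ, ∀ l : ℕ, ∀ i ∈ Finset.Icc 1 l,
      ((ξ k - ξ k' : ℤ_[p]) : ℚ_[p]) + (i : ℚ_[p]) ≠ 0 ∧
        ‖((ξ k - ξ k' : ℤ_[p]) : ℚ_[p]) + (i : ℚ_[p])‖⁻¹ ≤ C * δ ^ l :=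
    fun δ hδ k k' => aux_nl p _ (hNL k k') (hNI k k') δ hδ
  constructor
  · intro l
    unfold DjlPolyL
    rw [mul_comm, map_mul, Module.End.mul_apply]
    have h0 : (Polynomial.X + Polynomial.C ((0 : ℤ) : L)) = Polynomial.X := by simp
    rw [h0, Polynomial.comp_X, aux_eig N _ _ (hQ (v 0))]
    convert one_smul L _
    rw [Polynomial.eval_prod]
    refine Finset.prod_eq_one fun k _ => ?_
    rw [Polynomial.eval_prod]
    refine Finset.prod_eq_one fun i hi => ?_
    obtain ⟨C1, h1⟩ := hnl 2 one_lt_two k ⟨0, hn₀⟩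
    obtain ⟨C2, h2⟩ := hnl 2 one_lt_two ⟨0, hn₀⟩ k
    have h1 := (h1 l i hi).1
    have h2 := (h2 l i hi).1
    rw [PadicInt.coe_sub] at h1 h2
    rw [← map_ne_zero_iff _ hinj] at h1 h2
    simp only [map_add, map_sub, map_natCast] at h1 h2
    simp only [Polynomial.eval_pow, Polynomial.eval_mul, Polynomial.eval_C, Polynomial.eval_sub,
      Polynomial.eval_add, Polynomial.eval_X, Int.cast_zero, zero_sub, map_sub]
    generalize algebraMap ℚ_[p] L (ξ ⟨0, hn₀⟩ : ℚ_[p]) = x at h1 h2 ⊢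
    generalize algebraMap ℚ_[p] L (ξ k : ℚ_[p]) = y at h1 h2 ⊢
    have e1 : (i : L) - (x - y) ≠ 0 := by
      intro h; apply h1; linear_combination h
    have e2 : (i : L) + (x - y) ≠ 0 := by
      intro h; apply h2; linear_combination h
    rw [← sub_eq_add_neg x y]
    rw [inv_mul_cancel₀ (mul_ne_zero e1 e2), one_pow]
  · intro ε hε
    set r := max (c / e) (d / b) with hr
    have hb : 0 < b := hd.trans hdb
    have hc : 0 < c := hb.trans_le hbc
    have he0 : 0 < e := hc.trans hce
    have hr1 : r < 1 := max_lt ((div_lt_one he0).2 hce) ((div_lt_one hb).2 hdb)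
    have hr0 : 0 < r := lt_max_of_lt_left (by positivity)
    obtain ⟨δ, hδ, hδr⟩ := aux_delta r hr1 (4 * m * n₀)
    have hδ0 : 0 < δ := by linarith
    -- boundedness of N
    have hnt : ∃ x : L, 1 < ‖x‖ := by
      refine ⟨algebraMap ℚ_[p] L (p : ℚ_[p])⁻¹, ?_⟩
      rw [norm_algebraMap', norm_inv, Padic.norm_p, inv_inv]
      exact_mod_cast (Fact.out : p.Prime).one_lt
    obtain ⟨K, hK⟩ := aux_bdd hnt N
    obtain ⟨T, hT⟩ := aux_list p L ξ m Finset.univ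
    obtain ⟨B0, hB0, hgr⟩ := growth p hK T
    obtain ⟨G, hG0, hG⟩ := aux_subexp B0 hB0 T.length δ hδ
    have hgrow : ∀ (l : ℕ) (a : ℤ_[p]),
        PB N (Ring.choose (Polynomial.X + Polynomial.C (phiL p L a)) l) (G * δ ^ l) := by
      intro l a
      refine ⟨by positivity, fun w => ?_⟩
      refine (hgr a l w ?_).trans (mul_le_mul_of_nonneg_right (hG l) (norm_nonneg _))
      rw [hT, hann]; rfl
    obtain ⟨M, hM⟩ := PB.comp_shift hK (Q.map (algebraMap ℚ_[p] L))
    choose C hC using hnl δ hδ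
    let Ck : Fin n₀ → ℝ := fun k => max 1 (max (C k ⟨0, hn₀⟩) (C ⟨0, hn₀⟩ k))
    have hD : ∀ (j : ℤ) (l : ℕ), PB N (DjlPolyL p L n₀ hn₀ ξ m Q j l)
        (M * ∏ k : Fin n₀, (((Ck k * δ ^ l) * (Ck k * δ ^ l)) *
          ((G * δ ^ l) * (G * δ ^ l))) ^ m) := by
      intro j l
      unfold DjlPolyL
      refine (hM j).mul (PB.prod _ fun k _ => ?_)
      rw [Finset.prod_pow]
      refine PB.pow ?_ m
      have hδl : 1 ≤ δ ^ l := one_le_pow₀ hδ.le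
      refine factor_bound p l (hgrow l) _ ((j : ℤ_[p]) - ξ k) _ ?_ ?_ ?_ ?_
      · rw [map_sub, map_intCast]; rfl
      · exact one_le_mul_of_one_le_of_one_le (le_max_left _ _) hδl
      · intro i hi
        have h := hC k ⟨0, hn₀⟩ l i hi
        have e : (i : ℚ_[p]) - ((ξ ⟨0, hn₀⟩ : ℚ_[p]) - (ξ k : ℚ_[p])) =
            ((ξ k - ξ ⟨0, hn₀⟩ : ℤ_[p]) : ℚ_[p]) + (i : ℚ_[p]) := by
          rw [PadicInt.coe_sub]; ring
        rw [e]
        refine ⟨h.1, h.2.trans ?_⟩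
        gcongr
        exact (le_max_left _ _).trans (le_max_right _ _)
      · intro i hi
        have h := hC ⟨0, hn₀⟩ k l i hi
        have e : (i : ℚ_[p]) + ((ξ ⟨0, hn₀⟩ : ℚ_[p]) - (ξ k : ℚ_[p])) =
            ((ξ ⟨0, hn₀⟩ - ξ k : ℤ_[p]) : ℚ_[p]) + (i : ℚ_[p]) := by
          rw [PadicInt.coe_sub]; ring
        rw [e]
        refine ⟨h.1, h.2.trans ?_⟩
        gcongr
        exact (le_max_right _ _).trans (le_max_right _ _)
    have hM0 : 0 ≤ M := (hM 0).1
    set A : ℝ := M * ∏ k : Fin n₀, (Ck k * Ck k * (G * G)) ^ m with hA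
    have hCk0 : ∀ k, 0 ≤ Ck k := fun k => zero_le_one.trans (le_max_left _ _)
    have hA0 : 0 ≤ A := by
      refine mul_nonneg hM0 (Finset.prod_nonneg fun k _ => ?_)
      have := hCk0 k
      positivity
    have hAeq : ∀ l : ℕ, (M * ∏ k : Fin n₀, (((Ck k * δ ^ l) * (Ck k * δ ^ l)) *
          ((G * δ ^ l) * (G * δ ^ l))) ^ m) = A * (δ ^ (4 * m * n₀)) ^ l := by
      intro l
      have : ∀ k : Fin n₀, (((Ck k * δ ^ l) * (Ck k * δ ^ l)) *
          ((G * δ ^ l) * (G * δ ^ l))) ^ m = (Ck k * Ck k * (G * G)) ^ m * (δ ^ l) ^ (4 * m) := by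
        intro k
        rw [pow_mul, ← mul_pow]; congr 1; ring
      simp only [this]
      rw [Finset.prod_mul_distrib, Finset.prod_const, Finset.card_univ, Fintype.card_fin, hA,
        ← pow_mul, ← pow_mul, ← pow_mul]
      ring
    obtain ⟨B, hB⟩ := hv
    have hBn : 0 ≤ B := le_trans (by positivity) (hB 0)
    set ρ := δ ^ (4 * m * n₀) * r with hρ
    have hρ0 : 0 ≤ ρ := by positivity
    have hlim : Filter.Tendsto (fun l : ℕ => A * B * ρ ^ l) Filter.atTop (nhds 0) := by
      simpa using (tendsto_pow_atTop_nhds_zero_of_lt_one hρ0 hδr).const_mul (A * B)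
    obtain ⟨L₀, hL₀⟩ := Filter.eventually_atTop.1 (hlim.eventually (gt_mem_nhds hε))
    refine ⟨L₀, fun l hl j hj => ?_⟩
    by_cases hjl : j.natAbs ≤ l
    · obtain ⟨g, hg⟩ := aux_dvd p L n₀ hn₀ ξ m Q j l hj hjl
      rw [hg, map_mul, hann, zero_mul]
      simpa using hε.le
    · push Not at hjl
      have h1 := (hD j l).2 (v j)
      rw [hAeq] at h1
      have h2 := aux_weight d b c e hd hdb hbc hce j
      have hδE : 1 ≤ δ ^ (4 * m * n₀) := one_le_pow₀ hδ.le
      calc _ ≤ (A * (δ ^ (4 * m * n₀)) ^ l * ‖v j‖) * (r ^ j.natAbs * max (d ^ j) (e ^ j)) := by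
            gcongr
        _ = A * ((δ ^ (4 * m * n₀)) ^ l * r ^ j.natAbs) * (‖v j‖ * max (d ^ j) (e ^ j)) := by ring
        _ ≤ A * ((δ ^ (4 * m * n₀)) ^ j.natAbs * r ^ j.natAbs) * B := by
            gcongr
            · exact hB j
        _ = A * B * ρ ^ j.natAbs := by rw [hρ, mul_pow]; ring
        _ ≤ A * B * ρ ^ l := by
            refine mul_le_mul_of_nonneg_left ?_ (by positivity)
            exact pow_le_pow_of_le_one hρ0 hδr.le hjl.le
        _ ≤ ε := (hL₀ l hl).le
end
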